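/- arXiv:2506.10604 — 2 statements merged into one kernel-verified Lean document; each statement's English description precedes it below -/
import Mathlib

section
/- There is a constant C > 0 such that for every k ≥ 13, the antiprism on n = 2k vertices has at most C·n^{15} cycle double covers of size exactly n−1. -/
/-!
Write `n = 2k`, call the edges `{p, p + 1}` short and the edges `{p, p + 2}` long. A cycle has even
degree everywhere, so it meets all the cuts consisting of the short edge at `p` and the long edges
at `p - 1` and `p` with the same parity; it winds if this parity is odd. A cycle is therefore
determined by this parity together with its long edges, or together with its short edges and one
value of its long edges.

By connectedness, the long edges of a cycle that does not wind form a single run of consecutive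
edges, closed up by exactly two short edges. In a cover of size `n - 1` with `w` winding members,
counting the `2n` incidences with short edges leaves `2n - 2 (n - 1 - w) = 2 + 2w` of them to the
winding members. Hence `w > 0`, and `w ≤ 6` because every cut is crossed six times in total. So the
set `U` of positions of short edges of winding members has at most 14 elements.

If `p ∉ U`, counting the crossings of the cut at `p` shows that no other member contains both long
edges of this cut. So every member that does not wind either is a triangle `{p, p + 1, p + 2}` or
has all its long edges at or just before positions in `U`. Once `U` is enclosed in a set of 14
positions, the members other than triangles range over a family of bounded size, with multiplicities
at most 2, and the multiplicity of each triangle is then forced by its long edge. As there are at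
most `n ^ 14` choices of the 14 positions, the number of covers is at most a constant times
`n ^ 14`.
-/

open SimpleGraph

attribute [local instance] Classical.propDecidable

/-- A cycle in a graph: a connected, 2-regular subgraph. -/
def IsCycleSubgraph {V : Type*} {G : SimpleGraph V} (C : G.Subgraph) : Prop :=
  C.coe.Connected ∧ ∀ v ∈ C.verts, (C.neighborSet v).ncard = 2

/-- A cycle double cover: a multiset of cycles covering every edge exactly twice
(counted with multiplicity). -/
def IsCDC {V : Type*} (G : SimpleGraph V) (S : Multiset G.Subgraph) : Prop :=
  (∀ C ∈ S, IsCycleSubgraph C) ∧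
  ∀ e ∈ G.edgeSet, S.countP (fun C => e ∈ C.edgeSet) = 2

/-- Graph minor relation (via branch sets). -/
def HasGraphMinor {V : Type*} {W : Type*} (G : SimpleGraph V) (H : SimpleGraph W) : Prop :=
  ∃ f : W → Set V,
    (∀ w, (f w).Nonempty) ∧
    (∀ w, (G.induce (f w)).Connected) ∧
    (Pairwise fun w₁ w₂ => Disjoint (f w₁) (f w₂)) ∧
    ∀ ⦃w₁ w₂⦄, H.Adj w₁ w₂ → ∃ v₁ ∈ f w₁, ∃ v₂ ∈ f w₂, G.Adj v₁ v₂

/-- Planarity, via Wagner's theorem: no `K₅` minor and no `K_{3,3}` minor. -/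
def IsPlanar {V : Type*} (G : SimpleGraph V) : Prop :=
  ¬ HasGraphMinor G (completeGraph (Fin 5)) ∧
  ¬ HasGraphMinor G (completeBipartiteGraph (Fin 3) (Fin 3))

/-- `k`-connectivity: more than `k` vertices, and removing fewer than `k`
vertices leaves a connected graph. -/
def IsKConnected {V : Type*} [Fintype V] (k : ℕ) (G : SimpleGraph V) : Prop :=
  k < Fintype.card V ∧ ∀ s : Set V, s.ncard < k → (G.induce sᶜ).Connected

/-- A Hamiltonian cycle: a cycle through all vertices. -/
def IsHamCycle {V : Type*} (G : SimpleGraph V) (C : G.Subgraph) : Prop :=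
  IsCycleSubgraph C ∧ C.verts = Set.univ

/-- The antiprism on `2k` vertices: the square of the cycle `C_{2k}`. -/
def antiprism (k : ℕ) : SimpleGraph (ZMod (2 * k)) :=
  SimpleGraph.fromRel fun v w => w = v + 1 ∨ w = v + 2

lemma zmod_natCast_ne_zero {n j : ℕ} (hj : j ≠ 0) (hjn : j < n) : (j : ZMod n) ≠ 0 :=
  fun h ↦ Nat.not_dvd_of_pos_of_lt (Nat.pos_of_ne_zero hj) hjn ((ZMod.natCast_eq_zero_iff j n).1 h)

lemma zmod_induction_add_one {n : ℕ} [NeZero n] {P : ZMod n → Prop} (q : ZMod n) (base : P q)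
    (step : ∀ p, P p → P (p + 1)) (p : ZMod n) : P p := by
  have key (m : ℕ) : P (q + m) := by
    induction m with
    | zero => simpa using base
    | succ m ih => simpa [add_assoc] using step _ ih
  simpa using key (p - q).val

lemma sum_map_ite_eq_countP {α : Type*} (P : α → Prop) [DecidablePred P] (S : Multiset α) :
    (S.map fun c ↦ if P c then 1 else 0).sum = S.countP P := by
  induction S using Multiset.induction with
  | empty => simp
  | cons a S ih => rw [Multiset.countP_cons, Multiset.map_cons, Multiset.sum_cons, ih, add_comm]

lemma exists_subset_image_univ_of_card_le {α : Type*} [Nonempty α] [DecidableEq α]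
    {U : Finset α} {m : ℕ} (hU : U.card ≤ m) : ∃ f : Fin m → α, U ⊆ Finset.univ.image f := by
  obtain ⟨e⟩ : Nonempty (U ↪ Fin m) := Function.Embedding.nonempty_of_card_le (by simpa using hU)
  refine ⟨Function.extend e Subtype.val fun _ ↦ Classical.arbitrary α, fun p hp ↦ ?_⟩
  exact Finset.mem_image.2 ⟨e ⟨p, hp⟩, Finset.mem_univ _, e.injective.extend_apply _ _ ⟨p, hp⟩⟩

lemma card_Iic_nsmul_val {α : Type*} (m : ℕ) (A : Finset α) :
    (Finset.Iic (m • A.val)).card = (m + 1) ^ A.card := by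
  rcases eq_or_ne m 0 with rfl | hm
  · simp [Multiset.card_Iic]
  · rw [Multiset.card_Iic, Multiset.toFinset_nsmul _ _ hm, Finset.val_toFinset,
      Finset.prod_congr rfl fun a ha ↦ ?_, Finset.prod_const]
    rw [Multiset.count_nsmul, Multiset.count_eq_one_of_mem A.nodup ha, mul_one]

section Graph

variable {V : Type*} {G : SimpleGraph V} {C C' : G.Subgraph} {S : Multiset G.Subgraph}

lemma IsCycleSubgraph.mem_verts_iff (hC : IsCycleSubgraph C) {v : V} :
    v ∈ C.verts ↔ ∃ w, C.Adj v w := by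
  refine ⟨fun hv ↦ ?_, fun ⟨w, hw⟩ ↦ hw.fst_mem⟩
  exact Set.nonempty_of_ncard_ne_zero (s := C.neighborSet v) (by simp [hC.2 v hv])

lemma IsCycleSubgraph.exists_adj (hC : IsCycleSubgraph C) : ∃ u v, C.Adj u v := by
  obtain ⟨⟨v, hv⟩⟩ := hC.1.nonempty
  exact ⟨v, hC.mem_verts_iff.1 hv⟩

lemma IsCycleSubgraph.ext (hC : IsCycleSubgraph C) (hC' : IsCycleSubgraph C')
    (h : C.Adj = C'.Adj) : C = C' :=
  Subgraph.ext (Set.ext fun v ↦ by rw [hC.mem_verts_iff, hC'.mem_verts_iff, h]) h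

lemma IsCycleSubgraph.verts_subset_of_closed (hC : IsCycleSubgraph C) {X : Set V}
    (hX : ∀ u v, C.Adj u v → u ∈ X → v ∈ X) {v : V} (hv : v ∈ C.verts) (hvX : v ∈ X) :
    C.verts ⊆ X := by
  intro w hw
  have hvw := (reachable_iff_reflTransGen _ _).1 (hC.1.preconnected ⟨v, hv⟩ ⟨w, hw⟩)
  suffices ∀ x : C.verts, Relation.ReflTransGen C.coe.Adj ⟨v, hv⟩ x → x.1 ∈ X from this _ hvw
  intro x hx
  induction hx with
  | refl => exact hvX
  | tail _ hadj ih => exact hX _ _ hadj ih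

lemma IsCycleSubgraph.ncard_neighborSet (hC : IsCycleSubgraph C) (v : V) :
    (C.neighborSet v).ncard = 0 ∨ (C.neighborSet v).ncard = 2 := by
  by_cases hv : v ∈ C.verts
  · exact Or.inr (hC.2 v hv)
  · have hempty : C.neighborSet v = ∅ :=
      Set.eq_empty_of_forall_notMem fun w hw ↦ hv (C.edge_vert hw)
    exact Or.inl (by rw [hempty, Set.ncard_empty])

lemma IsCDC.sum_indicator (hS : IsCDC G S) {u v : V} (h : G.Adj u v) :
    (S.map fun C ↦ if C.Adj u v then 1 else 0).sum = 2 :=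
  (sum_map_ite_eq_countP _ S).trans (hS.2 s(u, v) h)

lemma IsCDC.count_le_two (hS : IsCDC G S) (C : G.Subgraph) : S.count C ≤ 2 := by
  by_cases hC : C ∈ S
  · obtain ⟨u, v, huv⟩ := (hS.1 C hC).exists_adj
    rw [← hS.2 s(u, v) huv.adj_sub, Multiset.count, Multiset.countP_eq_card_filter,
      Multiset.countP_eq_card_filter]
    exact Multiset.card_le_card (Multiset.monotone_filter_right S (by rintro D rfl; exact huv))
  · simp [Multiset.count_eq_zero_of_notMem hC]

end Graph

/-! ### Short and long edges -/

/-- Indicator of the short edge `{p, p + 1}` in `C`. -/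
noncomputable def short {k : ℕ} (C : (antiprism k).Subgraph) (p : ZMod (2 * k)) : ℕ :=
  if C.Adj p (p + 1) then 1 else 0

/-- Indicator of the long edge `{p, p + 2}` in `C`. -/
noncomputable def long {k : ℕ} (C : (antiprism k).Subgraph) (p : ZMod (2 * k)) : ℕ :=
  if C.Adj p (p + 2) then 1 else 0

/-- `C` crosses the cut between `-1, 0` and `1, 2` an odd number of times. If `C` is a cycle, it
then crosses all such cuts an odd number of times, i.e. it winds around the antiprism. -/
def Winds {k : ℕ} (C : (antiprism k).Subgraph) : Prop :=
  (short C 0 + long C (0 - 1) + long C 0) % 2 = 1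

/-- The number of short edges of `C`. -/
noncomputable def numShort {k : ℕ} [NeZero k] (C : (antiprism k).Subgraph) : ℕ :=
  ∑ p, short C p

/-- `C` has exactly the edges of the triangle `{p, p + 1, p + 2}` for some `p`. -/
def IsTriangle {k : ℕ} (C : (antiprism k).Subgraph) : Prop :=
  ∃ p, ∀ q, (short C q = 1 ↔ q = p ∨ q = p + 1) ∧ (long C q = 1 ↔ q = p)

section Edges

variable {k : ℕ} {C C' : (antiprism k).Subgraph} {p : ZMod (2 * k)}

lemma short_le_one (C : (antiprism k).Subgraph) (p : ZMod (2 * k)) : short C p ≤ 1 := by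
  unfold short; split_ifs <;> simp

lemma long_le_one (C : (antiprism k).Subgraph) (p : ZMod (2 * k)) : long C p ≤ 1 := by
  unfold long; split_ifs <;> simp

lemma short_eq_one_iff : short C p = 1 ↔ C.Adj p (p + 1) := by simp [short]

lemma long_eq_one_iff : long C p = 1 ↔ C.Adj p (p + 2) := by simp [long]

lemma short_eq_of_iff (h : short C p = 1 ↔ short C' p = 1) : short C p = short C' p := by
  have := short_le_one C p
  have := short_le_one C' p
  omega

lemma long_eq_of_iff (h : long C p = 1 ↔ long C' p = 1) : long C p = long C' p := by
  have := long_le_one C p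
  have := long_le_one C' p
  omega

lemma adj_iff_short_or_long {u v : ZMod (2 * k)} :
    C.Adj u v ↔ (v = u + 1 ∧ short C u = 1) ∨ (v = u + 2 ∧ long C u = 1) ∨
      (u = v + 1 ∧ short C v = 1) ∨ (u = v + 2 ∧ long C v = 1) := by
  simp only [short_eq_one_iff, long_eq_one_iff]
  constructor
  · intro h
    have hadj := h.adj_sub
    rw [antiprism, fromRel_adj] at hadj
    rcases hadj.2 with (rfl | rfl) | (rfl | rfl) <;> simp [h, h.symm]
  · rintro (⟨rfl, h⟩ | ⟨rfl, h⟩ | ⟨rfl, h⟩ | ⟨rfl, h⟩)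
    exacts [h, h, h.symm, h.symm]

lemma IsCycleSubgraph.ext_short_long (hC : IsCycleSubgraph C) (hC' : IsCycleSubgraph C')
    (hshort : ∀ p, short C p = short C' p) (hlong : ∀ p, long C p = long C' p) : C = C' :=
  hC.ext hC' (by ext u v; simp only [adj_iff_short_or_long, hshort, hlong])

lemma IsCycleSubgraph.exists_short_or_long (hC : IsCycleSubgraph C) :
    ∃ p, short C p = 1 ∨ long C p = 1 := by
  obtain ⟨u, v, huv⟩ := hC.exists_adj
  rcases adj_iff_short_or_long.1 huv with h | h | h | h
  exacts [⟨u, .inl h.2⟩, ⟨u, .inr h.2⟩, ⟨v, .inl h.2⟩, ⟨v, .inr h.2⟩]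

lemma IsCycleSubgraph.verts_subset_of_short_long (hC : IsCycleSubgraph C)
    {X : Set (ZMod (2 * k))} (hshort : ∀ u, short C u = 1 → (u ∈ X ↔ u + 1 ∈ X))
    (hlong : ∀ u, long C u = 1 → (u ∈ X ↔ u + 2 ∈ X)) {v : ZMod (2 * k)} (hv : v ∈ C.verts)
    (hvX : v ∈ X) : C.verts ⊆ X := by
  refine hC.verts_subset_of_closed (fun u w huw hu ↦ ?_) hv hvX
  rcases adj_iff_short_or_long.1 huw with ⟨rfl, h⟩ | ⟨rfl, h⟩ | ⟨rfl, h⟩ | ⟨rfl, h⟩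
  exacts [(hshort _ h).1 hu, (hlong _ h).1 hu, (hshort _ h).2 hu, (hlong _ h).2 hu]

lemma IsTriangle.eq_of_long_eq_one (hT : IsTriangle C) (hT' : IsTriangle C')
    (hC : IsCycleSubgraph C) (hC' : IsCycleSubgraph C') (h : long C p = 1) (h' : long C' p = 1) :
    C = C' := by
  obtain ⟨q, hq⟩ := hT
  obtain ⟨q', hq'⟩ := hT'
  obtain rfl := (hq p).2.1 h
  obtain rfl := (hq' p).2.1 h'
  exact hC.ext_short_long hC' (fun r ↦ short_eq_of_iff ((hq r).1.trans (hq' r).1.symm))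
    fun r ↦ long_eq_of_iff ((hq r).2.trans (hq' r).2.symm)

lemma sum_numShort [NeZero k] (S : Multiset (antiprism k).Subgraph) :
    (S.map numShort).sum = ∑ p, (S.map fun C ↦ short C p).sum :=
  Multiset.sum_map_sum_map S Finset.univ.val

end Edges

/-! ### Cycles in the antiprism -/

instance neZero_of_fact_three_le {k : ℕ} [hk : Fact (3 ≤ k)] : NeZero k :=
  ⟨by have := hk.out; omega⟩

section Cycles

variable {k : ℕ} [hk : Fact (3 ≤ k)] {C C' : (antiprism k).Subgraph}

lemma natCast_ne_zero_of_lt_six {j : ℕ} (hj : j ≠ 0) (hj6 : j < 6) : (j : ZMod (2 * k)) ≠ 0 :=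
  zmod_natCast_ne_zero hj (by have := hk.out; omega)

lemma antiprism_adj_add_one (p : ZMod (2 * k)) : (antiprism k).Adj p (p + 1) := by
  have := natCast_ne_zero_of_lt_six (k := k) one_ne_zero (by norm_num)
  simp_all [antiprism, fromRel_adj]

lemma antiprism_adj_add_two (p : ZMod (2 * k)) : (antiprism k).Adj p (p + 2) := by
  have := natCast_ne_zero_of_lt_six (k := k) two_ne_zero (by norm_num)
  simp_all [antiprism, fromRel_adj]

lemma nodup_neighbors (v : ZMod (2 * k)) : [v + 1, v - 1, v + 2, v - 2].Nodup := by
  have h1 : (1 : ZMod (2 * k)) ≠ 0 := mod_cast natCast_ne_zero_of_lt_six one_ne_zero (by simp)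
  have h2 : (2 : ZMod (2 * k)) ≠ 0 := mod_cast natCast_ne_zero_of_lt_six two_ne_zero (by simp)
  have h3 : (3 : ZMod (2 * k)) ≠ 0 := mod_cast natCast_ne_zero_of_lt_six three_ne_zero (by simp)
  have h4 : (4 : ZMod (2 * k)) ≠ 0 := mod_cast natCast_ne_zero_of_lt_six four_ne_zero (by simp)
  simp only [List.nodup_cons, List.mem_cons, List.not_mem_nil, or_false, not_or, List.nodup_nil,
    not_false_eq_true, and_true]
  refine ⟨⟨fun h ↦ h2 ?_, fun h ↦ h1 ?_, fun h ↦ h3 ?_⟩,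
    ⟨fun h ↦ h3 ?_, fun h ↦ h1 ?_⟩, fun h ↦ h4 ?_⟩
  exacts [by linear_combination h, by linear_combination -h, by linear_combination h,
    by linear_combination -h, by linear_combination h, by linear_combination h]

lemma ncard_neighborSet_eq (C : (antiprism k).Subgraph) (v : ZMod (2 * k)) :
    (C.neighborSet v).ncard = short C v + short C (v - 1) + long C v + long C (v - 2) := by
  have hset : C.neighborSet v =
      ([v + 1, v - 1, v + 2, v - 2].toFinset.filter (C.Adj v) : Set _) := by
    ext w
    simp only [Subgraph.mem_neighborSet, Finset.coe_filter, Set.mem_ofPred_eq, List.mem_toFinset,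
      List.mem_cons, List.not_mem_nil, or_false, iff_and_self]
    intro h
    rcases adj_iff_short_or_long.1 h with ⟨h, -⟩ | ⟨h, -⟩ | ⟨h, -⟩ | ⟨h, -⟩ <;> simp [h]
  have hshort : short C (v - 1) = if C.Adj v (v - 1) then 1 else 0 := by
    rw [short, sub_add_cancel, C.adj_comm]
  have hlong : long C (v - 2) = if C.Adj v (v - 2) then 1 else 0 := by
    rw [long, sub_add_cancel, C.adj_comm]
  rw [hset, Set.ncard_coe_finset, Finset.card_filter, List.sum_toFinset _ (nodup_neighbors v),
    hshort, hlong, short, long]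
  simp only [List.map_cons, List.map_nil, List.sum_cons, List.sum_nil]
  ring

lemma IsCycleSubgraph.degree_eq_zero_or_two (hC : IsCycleSubgraph C) (v : ZMod (2 * k)) :
    short C v + short C (v - 1) + long C v + long C (v - 2) = 0 ∨
      short C v + short C (v - 1) + long C v + long C (v - 2) = 2 :=
  ncard_neighborSet_eq C v ▸ hC.ncard_neighborSet v

-- The cuts at `p` and `p + 1` differ by the edges at the vertex `p + 1`, whose number is even.
lemma IsCycleSubgraph.winds_iff (hC : IsCycleSubgraph C) (p : ZMod (2 * k)) :
    Winds C ↔ (short C p + long C (p - 1) + long C p) % 2 = 1 := by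
  refine zmod_induction_add_one (P := fun p ↦
    Winds C ↔ (short C p + long C (p - 1) + long C p) % 2 = 1) 0 Iff.rfl (fun p hp ↦ ?_) p
  have hdeg := hC.degree_eq_zero_or_two (p + 1)
  rw [add_sub_cancel_right, show p + 1 - 2 = p - 1 by ring] at hdeg
  rw [hp, add_sub_cancel_right]
  omega

lemma IsCycleSubgraph.eq_of_long_eq (hC : IsCycleSubgraph C) (hC' : IsCycleSubgraph C')
    (hw : Winds C ↔ Winds C') (hlong : ∀ p, long C p = long C' p) : C = C' := by
  refine hC.ext_short_long hC' (fun p ↦ ?_) hlong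
  rw [hC.winds_iff p, hC'.winds_iff p, hlong, hlong] at hw
  have := short_le_one C p
  have := short_le_one C' p
  omega

lemma IsCycleSubgraph.eq_of_short_eq (hC : IsCycleSubgraph C) (hC' : IsCycleSubgraph C')
    (hw : Winds C ↔ Winds C') (hshort : ∀ p, short C p = short C' p)
    (hlong : long C 0 = long C' 0) : C = C' := by
  refine hC.ext_short_long hC' hshort (zmod_induction_add_one 0 hlong fun p hp ↦ ?_)
  rw [hC.winds_iff (p + 1), hC'.winds_iff (p + 1), add_sub_cancel_right, hshort, hp] at hw
  have := long_le_one C (p + 1)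
  have := long_le_one C' (p + 1)
  omega

-- The long edges alone form two disjoint cycles, on the even and on the odd vertices.
lemma IsCycleSubgraph.exists_long_eq_zero (hC : IsCycleSubgraph C) (hw : ¬ Winds C) :
    ∃ p, long C p = 0 := by
  by_contra! hne
  have hlong (p) : long C p = 1 := by have := hne p; have := long_le_one C p; omega
  have hshort (p) : short C p ≠ 1 := by
    have := mt (hC.winds_iff p).2 hw
    rw [hlong, hlong] at this
    omega
  let parity := ZMod.castHom (Dvd.intro k rfl : 2 ∣ 2 * k) (ZMod 2)
  have parity_two : parity 2 = 0 := (map_ofNat parity 2).trans (ZMod.natCast_self 2)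
  have hsub : C.verts ⊆ {v | parity v = 0} :=
    hC.verts_subset_of_short_long (fun u hu ↦ absurd hu (hshort u))
      (fun u _ ↦ by simp [parity_two]) (long_eq_one_iff.1 (hlong 0)).fst_mem (map_zero parity)
  simpa using hsub (long_eq_one_iff.1 (hlong 1)).fst_mem

end Cycles

/-! ### Cycles that do not wind -/

/-- The arc of consecutive vertices `i, i + 1, …, i + m`. -/
def arc {n : ℕ} (i : ZMod n) (m : ℕ) : Set (ZMod n) :=
  {v | ∃ t ≤ m, v = i + t}

/-- The edges `{p, p + 2}` for `p = i, …, i + m - 1` form a maximal run of long edges of `C`. -/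
structure IsLongRun {k : ℕ} (C : (antiprism k).Subgraph) (i : ZMod (2 * k)) (m : ℕ) : Prop where
  pos : 0 < m
  before : long C (i - 1) = 0
  inside : ∀ t < m, long C (i + t) = 1
  after : long C (i + m) = 0

lemma add_one_mem_arc_iff {n : ℕ} {i v : ZMod n} {m : ℕ} (hlast : v ≠ i + m) (hfirst : v + 1 ≠ i) :
    v + 1 ∈ arc i m ↔ v ∈ arc i m := by
  constructor
  · rintro ⟨t | t, ht, hv⟩
    · simp_all
    · exact ⟨t, by omega, by push_cast at hv; linear_combination hv⟩
  · rintro ⟨t, ht, rfl⟩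
    have : t ≠ m := by rintro rfl; exact hlast rfl
    exact ⟨t + 1, by omega, by push_cast; ring⟩

section NotWinds

variable {k : ℕ} {C : (antiprism k).Subgraph} {i p : ZMod (2 * k)} {m : ℕ}

lemma IsLongRun.long_first (h : IsLongRun C i m) : long C i = 1 := by
  simpa using h.inside 0 h.pos

lemma IsLongRun.long_last (h : IsLongRun C i m) : long C (i + m - 1) = 1 := by
  have := h.inside (m - 1) (by have := h.pos; omega)
  rwa [Nat.cast_pred h.pos, ← add_sub_assoc] at this

lemma exists_isLongRun_of_long_eq [NeZero k] (hbefore : long C (i - 1) = 0) (hi : long C i = 1) :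
    ∃ m, IsLongRun C i m := by
  have hend : ∃ t : ℕ, long C (i + t) = 0 :=
    ⟨(-1 : ZMod (2 * k)).val, by rwa [ZMod.natCast_zmod_val, ← sub_eq_add_neg]⟩
  refine ⟨Nat.find hend, ?_, hbefore, fun t ht ↦ ?_, Nat.find_spec hend⟩
  · simp [hi]
  · have := Nat.find_min hend ht
    have := long_le_one C (i + t)
    omega

lemma IsCycleSubgraph.verts_subset_arc (hC : IsCycleSubgraph C)
    (hboundary : ∀ p, p = i - 1 ∨ p = i + m → short C p = 0 ∧ long C (p - 1) = 0 ∧ long C p = 0)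
    (hi : i ∈ C.verts) : C.verts ⊆ arc i m := by
  have step {u} (hu : ¬ (u = i - 1 ∨ u = i + m)) : u + 1 ∈ arc i m ↔ u ∈ arc i m := by
    rw [not_or] at hu
    exact add_one_mem_arc_iff hu.2 (mt eq_sub_of_add_eq hu.1)
  refine hC.verts_subset_of_short_long (fun u hu ↦ ?_) (fun u hu ↦ ?_) hi ⟨0, by simp⟩
  · exact (step fun h ↦ by simp [hboundary u h] at hu).symm
  · rw [show u + 2 = u + 1 + 1 by ring, step fun h ↦ ?_, step fun h ↦ ?_]
    · simp [hboundary u h] at hu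
    · simpa [hu] using (hboundary (u + 1) h).2.1

variable [hk : Fact (3 ≤ k)]

lemma IsCycleSubgraph.even_cut (hC : IsCycleSubgraph C) (hw : ¬ Winds C) (p : ZMod (2 * k)) :
    (short C p + long C (p - 1) + long C p) % 2 = 0 :=
  Nat.mod_two_ne_one.1 (mt (hC.winds_iff p).2 hw)

lemma IsLongRun.short_first (h : IsLongRun C i m) (hC : IsCycleSubgraph C) (hw : ¬ Winds C) :
    short C i = 1 := by
  have := hC.even_cut hw i
  have := short_le_one C i
  have := h.before
  have := h.long_first
  omega

lemma IsLongRun.short_last (h : IsLongRun C i m) (hC : IsCycleSubgraph C) (hw : ¬ Winds C) :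
    short C (i + m) = 1 := by
  have := hC.even_cut hw (i + m)
  have := short_le_one C (i + m)
  have := h.after
  have := h.long_last
  omega

lemma IsLongRun.boundary (h : IsLongRun C i m) (hC : IsCycleSubgraph C) (hw : ¬ Winds C)
    (hp : p = i - 1 ∨ p = i + (m + 1 : ℕ)) :
    short C p = 0 ∧ long C (p - 1) = 0 ∧ long C p = 0 := by
  rcases hp with rfl | rfl
  · have hdeg := hC.degree_eq_zero_or_two i
    rw [h.short_first hC hw, h.long_first] at hdeg
    rw [sub_sub, one_add_one_eq_two]
    exact ⟨by omega, by omega, h.before⟩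
  · have hdeg := hC.degree_eq_zero_or_two (i + m + 1)
    rw [add_sub_cancel_right, h.short_last hC hw, show i + m + 1 - 2 = i + m - 1 by ring,
      h.long_last] at hdeg
    rw [Nat.cast_succ, ← add_assoc, add_sub_cancel_right]
    exact ⟨by omega, h.after, by omega⟩

lemma IsLongRun.long_eq_one_iff (h : IsLongRun C i m) (hC : IsCycleSubgraph C) (hw : ¬ Winds C) :
    long C p = 1 ↔ ∃ t < m, p = i + t := by
  refine ⟨fun hp ↦ ?_, fun ⟨t, ht, hp⟩ ↦ hp ▸ h.inside t ht⟩
  have hverts : C.verts ⊆ arc i (m + 1) := hC.verts_subset_arc (fun q hq ↦ h.boundary hC hw hq)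
    (_root_.long_eq_one_iff.1 h.long_first).fst_mem
  obtain ⟨t, ht, rfl⟩ := hverts (_root_.long_eq_one_iff.1 hp).fst_mem
  have htm : t ≠ m := by rintro rfl; simp [h.after] at hp
  have htm' : t ≠ m + 1 := by
    rintro rfl
    simp [-Nat.cast_add, (h.boundary hC hw (.inr rfl)).2.2] at hp
  exact ⟨t, by omega, rfl⟩

lemma IsLongRun.short_eq_one_iff (h : IsLongRun C i m) (hC : IsCycleSubgraph C) (hw : ¬ Winds C) :
    short C p = 1 ↔ p = i ∨ p = i + m := by
  refine ⟨fun hp ↦ ?_, ?_⟩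
  · have hcut := hC.even_cut hw p
    have := long_le_one C p
    have := long_le_one C (p - 1)
    obtain ⟨hp0, hp1⟩ | ⟨hp0, hp1⟩ : long C (p - 1) = 0 ∧ long C p = 1 ∨
        long C (p - 1) = 1 ∧ long C p = 0 := by omega
    · left
      obtain ⟨t, ht, rfl⟩ := (h.long_eq_one_iff hC hw).1 hp1
      rcases t with _ | t
      · simp
      · rw [Nat.cast_succ, ← add_assoc, add_sub_cancel_right, h.inside t (by omega)] at hp0
        simp at hp0
    · right
      obtain ⟨t, ht, htp⟩ := (h.long_eq_one_iff hC hw).1 hp0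
      obtain rfl : p = i + (t + 1 : ℕ) := by push_cast; linear_combination htp
      have : ¬ t + 1 < m := fun ht' ↦ by simp [-Nat.cast_add, h.inside _ ht'] at hp1
      rw [show t + 1 = m by omega]
  · rintro (rfl | rfl)
    exacts [h.short_first hC hw, h.short_last hC hw]

lemma IsCycleSubgraph.exists_isLongRun (hC : IsCycleSubgraph C) (hw : ¬ Winds C) :
    ∃ i m, IsLongRun C i m := by
  obtain ⟨q, hq⟩ := hC.exists_long_eq_zero hw
  obtain ⟨i, hbefore, hi⟩ : ∃ i, long C (i - 1) = 0 ∧ long C i = 1 := by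
    by_contra! hne
    have hlong : ∀ p, long C p = 0 := zmod_induction_add_one q hq fun p hp ↦ by
      have := hne (p + 1) (by rwa [add_sub_cancel_right])
      have := long_le_one C (p + 1)
      omega
    obtain ⟨p, hp⟩ := hC.exists_short_or_long
    have := hC.even_cut hw p
    have := hlong p
    have := hlong (p - 1)
    omega
  exact ⟨i, exists_isLongRun_of_long_eq hbefore hi⟩

lemma IsCycleSubgraph.numShort_eq_two (hC : IsCycleSubgraph C) (hw : ¬ Winds C) :
    numShort C = 2 := by
  obtain ⟨i, m, h⟩ := hC.exists_isLongRun hw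
  have hne : i ≠ i + m := fun him ↦ by simpa [← him, h.long_first] using h.after
  have hsum : numShort C = (Finset.univ.filter fun p ↦ short C p = 1).card := by
    rw [Finset.card_filter]
    refine Finset.sum_congr rfl fun p _ ↦ ?_
    have := short_le_one C p
    split_ifs <;> omega
  have hset : (Finset.univ.filter fun p ↦ short C p = 1) = {i, i + (m : ZMod (2 * k))} := by
    ext p
    simp [h.short_eq_one_iff hC hw]
  rw [hsum, hset, Finset.card_pair hne]

lemma IsCycleSubgraph.isTriangle_of_isolated_long (hC : IsCycleSubgraph C) (hw : ¬ Winds C)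
    (hbefore : long C (p - 1) = 0) (hp : long C p = 1) (hafter : long C (p + 1) = 0) :
    IsTriangle C := by
  have h : IsLongRun C p 1 := ⟨one_pos, hbefore, by simpa using hp, by simpa using hafter⟩
  refine ⟨p, fun q ↦ ⟨?_, ?_⟩⟩
  · simpa using h.short_eq_one_iff hC hw
  · simpa using h.long_eq_one_iff hC hw

end NotWinds

/-! ### Cycle double covers of the antiprism -/

/-- The positions of the short edges lying on a winding member of `S`. -/
noncomputable def windingShort {k : ℕ} [NeZero k] (S : Multiset (antiprism k).Subgraph) :
    Finset (ZMod (2 * k)) :=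
  {p | ∃ C ∈ S, Winds C ∧ short C p = 1}

lemma card_windingShort_le {k : ℕ} [NeZero k] (S : Multiset (antiprism k).Subgraph) :
    (windingShort S).card ≤ ((S.filter Winds).map numShort).sum := by
  rw [sum_numShort, windingShort, Finset.card_filter]
  refine Finset.sum_le_sum fun p _ ↦ ?_
  split_ifs with h
  · obtain ⟨C, hC, hw, hp⟩ := h
    have hmem : short C p ∈ (S.filter Winds).map fun C ↦ short C p :=
      Multiset.mem_map_of_mem _ (Multiset.mem_filter.2 ⟨hC, hw⟩)
    exact hp ▸ Multiset.le_sum_of_mem hmem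
  · exact Nat.zero_le _

/-- All short edges of `C`, if it winds, respectively all long edges of `C`, if it does not, are
near `U`. A cycle with this property is determined by `U` up to boundedly many possibilities. -/
def IsLocalized {k : ℕ} (U : Finset (ZMod (2 * k))) (C : (antiprism k).Subgraph) : Prop :=
  (Winds C ∧ ∀ p, short C p = 1 → p ∈ U) ∨ (¬ Winds C ∧ ∀ p, long C p = 1 → p ∈ U ∨ p + 1 ∈ U)

lemma IsLocalized.mono {k : ℕ} {U U' : Finset (ZMod (2 * k))} {C : (antiprism k).Subgraph}
    (h : IsLocalized U C) (hU : U ⊆ U') : IsLocalized U' C :=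
  h.imp (.imp_right fun h p hp ↦ hU (h p hp)) (.imp_right fun h p hp ↦ (h p hp).imp (@hU _) (@hU _))

lemma IsLocalized.mem_of_short_eq_one {k : ℕ} {U : Finset (ZMod (2 * k))}
    {C : (antiprism k).Subgraph} {p : ZMod (2 * k)} (h : IsLocalized U C) (hw : Winds C)
    (hp : short C p = 1) : p ∈ U :=
  h.elim (fun h ↦ h.2 p hp) fun h ↦ absurd hw h.1

lemma IsLocalized.mem_or_mem_of_long_eq_one {k : ℕ} {U : Finset (ZMod (2 * k))}
    {C : (antiprism k).Subgraph} {p : ZMod (2 * k)} (h : IsLocalized U C) (hw : ¬ Winds C)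
    (hp : long C p = 1) : p ∈ U ∨ p + 1 ∈ U :=
  h.elim (fun h ↦ absurd h.1 hw) fun h ↦ h.2 p hp

section Covers

variable {k : ℕ} [hk : Fact (3 ≤ k)] {S : Multiset (antiprism k).Subgraph}
  {C D : (antiprism k).Subgraph} {p : ZMod (2 * k)}

lemma IsCDC.sum_short (hS : IsCDC (antiprism k) S) (p : ZMod (2 * k)) :
    (S.map fun C ↦ short C p).sum = 2 :=
  hS.sum_indicator (antiprism_adj_add_one p)

lemma IsCDC.sum_long (hS : IsCDC (antiprism k) S) (p : ZMod (2 * k)) :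
    (S.map fun C ↦ long C p).sum = 2 :=
  hS.sum_indicator (antiprism_adj_add_two p)

lemma IsCDC.countP_winds_le (hS : IsCDC (antiprism k) S) : S.countP Winds ≤ 6 :=
  calc
    S.countP Winds = (S.map fun C ↦ if Winds C then 1 else 0).sum :=
      (sum_map_ite_eq_countP Winds S).symm
    _ ≤ (S.map fun C ↦ short C 0 + long C (0 - 1) + long C 0).sum :=
      Multiset.sum_map_le_sum_map _ _ fun C _ ↦ by unfold Winds; split_ifs <;> omega
    _ = 6 := by simp only [Multiset.sum_map_add, hS.sum_short, hS.sum_long]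

lemma IsCDC.sum_numShort_filter_winds (hS : IsCDC (antiprism k) S)
    (hcard : Multiset.card S = 2 * k - 1) :
    ((S.filter Winds).map numShort).sum = 2 + 2 * S.countP Winds := by
  have htotal : (S.map numShort).sum = 2 * (2 * k) := by
    simp [sum_numShort, hS.sum_short, mul_comm]
  have hnot : ((S.filter (¬ Winds ·)).map numShort).sum = 2 * S.countP (¬ Winds ·) := by
    rw [Multiset.map_congr rfl fun C hC ↦ (hS.1 C (Multiset.mem_of_mem_filter hC)).numShort_eq_two
      (Multiset.mem_filter.1 hC).2, Multiset.map_const', Multiset.sum_replicate, smul_eq_mul,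
      Multiset.countP_eq_card_filter, mul_comm]
  have hsplit := Multiset.card_eq_countP_add_countP Winds S
  rw [← Multiset.filter_add_not Winds S, Multiset.map_add, Multiset.sum_add, hnot] at htotal
  have := hk.out
  omega

lemma IsCDC.exists_winds (hS : IsCDC (antiprism k) S) (hcard : Multiset.card S = 2 * k - 1) :
    ∃ C ∈ S, Winds C := by
  by_contra! hne
  have := hS.sum_numShort_filter_winds hcard
  rw [Multiset.filter_eq_nil.2 hne, Multiset.map_zero, Multiset.sum_zero] at this
  omega

-- Otherwise every member has at least as many long as short edges in the cut at `p`, a winding one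
-- at least one more and `C` two more, so the two long edges are covered five times in total.
lemma IsCDC.mem_windingShort (hS : IsCDC (antiprism k) S) (hD : D ∈ S) (hDw : Winds D)
    (hC : C ∈ S) (hCw : ¬ Winds C) (hp : long C (p - 1) = 1) (hp' : long C p = 1) :
    p ∈ windingShort S := by
  by_contra hpS
  have hshort : ∀ E ∈ S, Winds E → short E p ≠ 1 := by simpa [windingShort] using hpS
  have hle : ∀ E ∈ S, short E p + (if Winds E then 1 else 0) + 2 * (if C = E then 1 else 0) ≤
      long E (p - 1) + long E p := by
    intro E hE
    have hcut := (hS.1 E hE).winds_iff p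
    have hEp := short_le_one E p
    rcases eq_or_ne C E with rfl | hne
    · simp only [hp, hp', hCw, if_false, if_true, false_iff] at hcut ⊢
      omega
    · by_cases hw : Winds E
      · have := hshort E hE hw
        simp only [hw, hne, if_false, if_true, true_iff] at hcut ⊢
        omega
      · simp only [hw, hne, if_false, false_iff] at hcut ⊢
        omega
  have hsum := Multiset.sum_map_le_sum_map _ _ hle
  simp only [Multiset.sum_map_add, Multiset.sum_map_mul_left, hS.sum_short, hS.sum_long,
    sum_map_ite_eq_countP] at hsum
  have := Multiset.countP_pos_of_mem hD hDw
  have : 0 < S.countP (Eq C) := Multiset.countP_pos_of_mem hC rfl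
  omega

lemma IsCDC.exists_isLocalized (hS : IsCDC (antiprism k) S)
    (hcard : Multiset.card S = 2 * k - 1) :
    ∃ U : Finset (ZMod (2 * k)), U.card ≤ 14 ∧ ∀ C ∈ S, IsTriangle C ∨ IsLocalized U C := by
  refine ⟨windingShort S, ?_, fun C hC ↦ ?_⟩
  · have := card_windingShort_le S
    have := hS.sum_numShort_filter_winds hcard
    have := hS.countP_winds_le
    omega
  obtain ⟨D, hD, hDw⟩ := hS.exists_winds hcard
  by_cases hw : Winds C
  · exact .inr (.inl ⟨hw, fun p hp ↦ by simpa [windingShort] using ⟨C, hC, hw, hp⟩⟩)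
  refine or_iff_not_imp_left.2 fun hT ↦ .inr ⟨hw, fun p hp ↦ ?_⟩
  by_contra! hpU
  refine hT ((hS.1 C hC).isTriangle_of_isolated_long hw ?_ hp ?_)
  · have := mt (fun h ↦ hS.mem_windingShort hD hDw hC hw h hp) hpU.1
    have := long_le_one C (p - 1)
    omega
  · have := mt (hS.mem_windingShort hD hDw hC hw (by rwa [add_sub_cancel_right])) hpU.2
    have := long_le_one C (p + 1)
    omega

end Covers

/-! ### Counting covers -/

/-- The finitely many cycles localized near `U`. -/
noncomputable def localizedCycles {k : ℕ} [NeZero k] (U : Finset (ZMod (2 * k))) :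
    Finset (antiprism k).Subgraph :=
  {C | IsCycleSubgraph C ∧ IsLocalized U C}

lemma mem_localizedCycles {k : ℕ} [NeZero k] {U : Finset (ZMod (2 * k))}
    {C : (antiprism k).Subgraph} :
    C ∈ localizedCycles U ↔ IsCycleSubgraph C ∧ IsLocalized U C := by
  simp [localizedCycles]

section Counting

variable {k : ℕ} [hk : Fact (3 ≤ k)] {S S' : Multiset (antiprism k).Subgraph}
  {C : (antiprism k).Subgraph} {p : ZMod (2 * k)}

lemma card_filter_winds_localizedCycles_le (U : Finset (ZMod (2 * k))) :
    ((localizedCycles U).filter Winds).card ≤ 2 ^ (U.card + 1) := by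
  let code (C : (antiprism k).Subgraph) := (Finset.univ.filter fun p ↦ short C p = 1, long C 0)
  have hcode : ∀ C ∈ (localizedCycles U).filter Winds,
      code C ∈ U.powerset ×ˢ Finset.range 2 := by
    intro C hC
    rw [Finset.mem_filter, mem_localizedCycles] at hC
    refine Finset.mk_mem_product (Finset.mem_powerset.2 fun p hp ↦ ?_)
      (Finset.mem_range.2 (Nat.lt_succ_of_le (long_le_one C 0)))
    exact hC.1.2.mem_of_short_eq_one hC.2 (Finset.mem_filter.1 hp).2
  have hinj : Set.InjOn code ((localizedCycles U).filter Winds) := by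
    intro C hC C' hC' h
    rw [Finset.mem_coe, Finset.mem_filter, mem_localizedCycles] at hC hC'
    obtain ⟨hset, hlong⟩ := Prod.ext_iff.1 h
    refine hC.1.1.eq_of_short_eq hC'.1.1 (iff_of_true hC.2 hC'.2) (fun p ↦ ?_) hlong
    exact short_eq_of_iff (by simpa [code] using Finset.ext_iff.1 hset p)
  calc
    _ ≤ (U.powerset ×ˢ Finset.range 2).card := Finset.card_le_card_of_injOn code hcode hinj
    _ = 2 ^ (U.card + 1) := by
      rw [Finset.card_product, Finset.card_powerset, Finset.card_range, pow_succ]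

lemma card_filter_not_winds_localizedCycles_le (U : Finset (ZMod (2 * k))) :
    ((localizedCycles U).filter (¬ Winds ·)).card ≤ 2 ^ (2 * U.card) := by
  let code (C : (antiprism k).Subgraph) := Finset.univ.filter fun p ↦ long C p = 1
  let near : Finset (ZMod (2 * k)) := U ∪ U.image (· - 1)
  have hcode : ∀ C ∈ (localizedCycles U).filter (¬ Winds ·), code C ∈ near.powerset := by
    intro C hC
    rw [Finset.mem_filter, mem_localizedCycles] at hC
    refine Finset.mem_powerset.2 fun p hp ↦ Finset.mem_union.2 ?_
    exact (hC.1.2.mem_or_mem_of_long_eq_one hC.2 (Finset.mem_filter.1 hp).2).imp_right fun h ↦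
      Finset.mem_image.2 ⟨p + 1, h, add_sub_cancel_right p 1⟩
  have hinj : Set.InjOn code ((localizedCycles U).filter (¬ Winds ·)) := by
    intro C hC C' hC' h
    rw [Finset.mem_coe, Finset.mem_filter, mem_localizedCycles] at hC hC'
    refine hC.1.1.eq_of_long_eq hC'.1.1 (iff_of_false hC.2 hC'.2) fun p ↦ ?_
    exact long_eq_of_iff (by simpa [code] using Finset.ext_iff.1 h p)
  have hnear : near.card ≤ 2 * U.card := by
    have himage : (U.image (· - 1)).card ≤ U.card := Finset.card_image_le
    have hunion : near.card ≤ U.card + (U.image (· - 1)).card := Finset.card_union_le _ _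
    omega
  calc
    _ ≤ near.powerset.card := Finset.card_le_card_of_injOn code hcode hinj
    _ = 2 ^ near.card := Finset.card_powerset near
    _ ≤ 2 ^ (2 * U.card) := Nat.pow_le_pow_right two_pos hnear

lemma card_localizedCycles_le {U : Finset (ZMod (2 * k))} {m : ℕ} (hU : U.card ≤ m) :
    (localizedCycles U).card ≤ 2 ^ (m + 1) + 2 ^ (2 * m) := by
  rw [← Finset.card_filter_add_card_filter_not Winds]
  exact add_le_add
    ((card_filter_winds_localizedCycles_le U).trans (Nat.pow_le_pow_right two_pos (by omega)))
    ((card_filter_not_winds_localizedCycles_le U).trans (Nat.pow_le_pow_right two_pos (by omega)))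

lemma IsCDC.count_add_countP_long (hS : IsCDC (antiprism k) S) (hC : IsCycleSubgraph C)
    (hT : IsTriangle C) (hp : long C p = 1) :
    S.count C + (S.filter (¬ IsTriangle ·)).countP (long · p = 1) = 2 := by
  have htotal : S.countP (long · p = 1) = 2 := by
    simpa only [long_eq_one_iff, Subgraph.mem_edgeSet] using
      hS.2 s(p, p + 2) (antiprism_adj_add_two p)
  have htriangle : (S.filter IsTriangle).countP (long · p = 1) = S.count C := by
    rw [Multiset.countP_filter]
    refine Multiset.countP_congr rfl fun D hD ↦ propext ⟨?_, ?_⟩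
    · exact fun ⟨hDp, hDT⟩ ↦ hT.eq_of_long_eq_one hDT hC (hS.1 D hD) hp hDp
    · rintro rfl
      exact ⟨hp, hT⟩
  rw [← htriangle, ← Multiset.countP_eq_countP_filter_add, htotal]

lemma IsCDC.eq_of_filter_not_isTriangle_eq (hS : IsCDC (antiprism k) S)
    (hS' : IsCDC (antiprism k) S')
    (h : S.filter (¬ IsTriangle ·) = S'.filter (¬ IsTriangle ·)) : S = S' := by
  ext C
  by_cases hC : IsCycleSubgraph C
  · by_cases hT : IsTriangle C
    · obtain ⟨p, hp⟩ := id hT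
      have hCp : long C p = 1 := (hp p).2.2 rfl
      have hcount := hS.count_add_countP_long hC hT hCp
      have hcount' := hS'.count_add_countP_long hC hT hCp
      rw [h] at hcount
      omega
    · rw [← Multiset.count_filter_of_pos (p := (¬ IsTriangle ·)) hT, h,
        Multiset.count_filter_of_pos (p := (¬ IsTriangle ·)) hT]
  · rw [Multiset.count_eq_zero_of_notMem (mt (hS.1 C) hC),
      Multiset.count_eq_zero_of_notMem (mt (hS'.1 C) hC)]

lemma IsCDC.filter_not_isTriangle_le (hS : IsCDC (antiprism k) S) {U : Finset (ZMod (2 * k))}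
    (hU : ∀ C ∈ S, IsTriangle C ∨ IsLocalized U C) :
    S.filter (¬ IsTriangle ·) ≤ 2 • (localizedCycles U).val := by
  refine Multiset.le_iff_count.2 fun C ↦ ?_
  by_cases hC : C ∈ S.filter (¬ IsTriangle ·)
  · obtain ⟨hCS, hT⟩ := Multiset.mem_filter.1 hC
    have hCU : C ∈ localizedCycles U :=
      mem_localizedCycles.2 ⟨hS.1 C hCS, (hU C hCS).resolve_left hT⟩
    rw [Multiset.count_nsmul, Multiset.count_eq_one_of_mem (Finset.nodup _) hCU,
      Multiset.count_filter_of_pos (p := (¬ IsTriangle ·)) hT]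
    exact hS.count_le_two C
  · rw [Multiset.count_eq_zero_of_notMem hC]
    exact Nat.zero_le _

lemma ncard_le_of_isLocalized {𝒮 : Set (Multiset (antiprism k).Subgraph)} (m : ℕ)
    (hCDC : ∀ S ∈ 𝒮, IsCDC (antiprism k) S)
    (hlocal : ∀ S ∈ 𝒮, ∃ U : Finset (ZMod (2 * k)), U.card ≤ m ∧
      ∀ C ∈ S, IsTriangle C ∨ IsLocalized U C) :
    𝒮.ncard ≤ 3 ^ (2 ^ (m + 1) + 2 ^ (2 * m)) * (2 * k) ^ m := by
  let family (f : Fin m → ZMod (2 * k)) : Finset (Multiset (antiprism k).Subgraph) :=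
    Finset.Iic (2 • (localizedCycles (Finset.univ.image f)).val)
  have hmaps : ∀ S ∈ 𝒮, S.filter (¬ IsTriangle ·) ∈ Finset.univ.biUnion family := by
    intro S hS
    obtain ⟨U, hU, hSU⟩ := hlocal S hS
    obtain ⟨f, hf⟩ := exists_subset_image_univ_of_card_le hU
    rw [Finset.mem_biUnion]
    refine ⟨f, Finset.mem_univ f, Finset.mem_Iic.2 ((hCDC S hS).filter_not_isTriangle_le ?_)⟩
    exact fun C hC ↦ (hSU C hC).imp_right (·.mono hf)
  have hinj : Set.InjOn (fun S ↦ S.filter (¬ IsTriangle ·)) 𝒮 := fun S hS S' hS' h ↦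
    (hCDC S hS).eq_of_filter_not_isTriangle_eq (hCDC S' hS') h
  have hfamily (f : Fin m → ZMod (2 * k)) :
      (family f).card ≤ 3 ^ (2 ^ (m + 1) + 2 ^ (2 * m)) := by
    rw [card_Iic_nsmul_val]
    refine Nat.pow_le_pow_right three_pos (card_localizedCycles_le ?_)
    simpa using Finset.card_image_le (s := Finset.univ) (f := f)
  calc
    𝒮.ncard ≤ (Finset.univ.biUnion family).card := by
      rw [← Set.ncard_coe_finset]
      exact Set.ncard_le_ncard_of_injOn _ hmaps hinj (Finset.finite_toSet _)
    _ ≤ Fintype.card (Fin m → ZMod (2 * k)) * 3 ^ (2 ^ (m + 1) + 2 ^ (2 * m)) :=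
      Finset.card_biUnion_le_card_mul _ _ _ fun f _ ↦ hfamily f
    _ = 3 ^ (2 ^ (m + 1) + 2 ^ (2 * m)) * (2 * k) ^ m := by
      rw [Fintype.card_fun, ZMod.card, Fintype.card_fin, mul_comm]

end Counting

theorem statement_10_general :
    ∃ C : ℝ, 0 < C ∧ ∀ k : ℕ, 3 ≤ k →
      ({S : Multiset (antiprism k).Subgraph |
          IsCDC (antiprism k) S ∧ Multiset.card S = 2 * k - 1}.ncard : ℝ) ≤
        C * ((2 * k : ℕ) : ℝ) ^ (14 : ℕ) := by
  -- `C` is made opaque so that its value is never computed.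
  obtain ⟨C, hC⟩ : ∃ C : ℕ, C = 3 ^ (2 ^ (14 + 1) + 2 ^ (2 * 14)) := ⟨_, rfl⟩
  refine ⟨C, by rw [hC]; positivity, fun k hk ↦ ?_⟩
  have : Fact (3 ≤ k) := ⟨hk⟩
  have hbound := ncard_le_of_isLocalized 14
    (𝒮 := {S | IsCDC (antiprism k) S ∧ Multiset.card S = 2 * k - 1})
    (fun S hS ↦ hS.1) (fun S hS ↦ hS.1.exists_isLocalized hS.2)
  rw [← hC] at hbound
  exact_mod_cast hbound

/-- There is a constant `C > 0` such that for every `k ≥ 13` the antiprism on `n = 2k`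
vertices has at most `C·n^{15}` cycle double covers of size exactly `n - 1`. -/
theorem statement_10 :
    ∃ C : ℝ, 0 < C ∧ ∀ k : ℕ, 13 ≤ k →
      ({S : Multiset (antiprism k).Subgraph |
          IsCDC (antiprism k) S ∧ Multiset.card S = 2 * k - 1}.ncard : ℝ) ≤
        C * ((2 * k : ℕ) : ℝ) ^ (15 : ℕ) := by
  obtain ⟨C, hC, h⟩ := statement_10_general
  refine ⟨C, hC, fun k hk ↦ (h k (by omega)).trans ?_⟩
  gcongr
  exacts [mod_cast (by omega : 1 ≤ 2 * k), by norm_num]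
end

section
/- For every plane triangulation T, c(T) ≤ Σ_{G ∈ 𝒫(T)} c(G), where 𝒫(T) is the set of pieces of the decomposition tree of T obtained by successively splitting T along separating triangles. -/
/-!
Every splitting step writes a piece as the union of two graphs `G` and `H` that meet exactly in a
triangle, so it suffices that `c(G ∪ H) ≤ c(G) + c(H)`. Take minimum cycle double covers `A` of `G`
and `B` of `H`; together they cover every edge of `G ∪ H` twice, except for the three edges of the
triangle, which are covered four times. If `A` or `B` contains the triangle twice, drop these two
copies. Otherwise, recording for each cycle which edges of the triangle it uses, one can pair some
cycles of `A` with some cycles of `B` so that each edge of the triangle is common to the two cycles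
of exactly one pair. Replacing every pair `{C, D}` by a decomposition of `C ∆ D` into cycles removes
the excess, and since `C` and `D` share an edge of the triangle and have at most one further vertex
in common, `C ∆ D` is a union of at most two edge-disjoint cycles.
-/

open SimpleGraph

attribute [local instance] Classical.propDecidable

/-- A (plane) triangulation, combinatorially: a maximal planar graph, i.e. a planar graph
on `n ≥ 3` vertices with exactly `3n - 6` edges (equivalently, every face is a triangle). -/
def IsTriangulation {V : Type*} [Fintype V] (G : SimpleGraph V) : Prop :=
  IsPlanar G ∧ 3 ≤ Fintype.card V ∧ G.edgeSet.ncard + 6 = 3 * Fintype.card V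

/-- A separating triangle: three pairwise adjacent vertices whose removal disconnects
the graph. -/
def HasSepTriangle {α : Type*} (H : SimpleGraph α) : Prop :=
  ∃ u v w : α, H.Adj u v ∧ H.Adj v w ∧ H.Adj u w ∧
    ¬ (H.induce {x | x ≠ u ∧ x ≠ v ∧ x ≠ w}).Connected

/-- The minimum size of a cycle double cover of `G` (`⊤` if `G` has none). -/
noncomputable def cdcMin {V : Type*} (G : SimpleGraph V) : ℕ∞ :=
  sInf {n : ℕ∞ | ∃ S : Multiset G.Subgraph, IsCDC G S ∧ (Multiset.card S : ℕ∞) = n}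

/-- `IsPieceDecomp T s P` : `P` is the multiset of (vertex sets of) pieces of the
decomposition of the triangulation `T.induce s` obtained by successively splitting along
separating triangles (retaining a copy of the separating triangle in each part), until no
piece has a separating triangle. -/
inductive IsPieceDecomp {V : Type*} (T : SimpleGraph V) :
    Finset V → Multiset (Finset V) → Prop
  | base (s : Finset V) :
      ¬ HasSepTriangle (T.induce (s : Set V)) → IsPieceDecomp T s {s}
  | split (s a b : Finset V) (P Q : Multiset (Finset V)) :
      a ∪ b = s → a ≠ s → b ≠ s →
      (a ∩ b).card = 3 →
      (∀ u ∈ a ∩ b, ∀ v ∈ a ∩ b, u ≠ v → T.Adj u v) →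
      (∀ u ∈ a, ∀ v ∈ b, T.Adj u v → u ∈ b ∨ v ∈ a) →
      IsPieceDecomp T a P → IsPieceDecomp T b Q →
      IsPieceDecomp T s (P + Q)

open scoped symmDiff

section Pairing

theorem countP_map_eq_countP_comp {α β : Type*} (f : α → β) (p : β → Prop) [DecidablePred p]
    (s : Multiset α) : (s.map f).countP p = s.countP (fun a => p (f a)) := by
  rw [Multiset.countP_map, Multiset.countP_eq_card_filter]

variable {α : Type*} {A B : Multiset α}

/-- A pairing of members of `A` with members of `B` relative to a trace `t : α → Set ι`: a multiset
`Z` of pairs, using each occurrence of a member at most once, such that every `i : ι` is in both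
traces for exactly one pair, and the two traces of every pair intersect. -/
structure IsPairing {ι : Type*} (t : α → Set ι) (A B : Multiset α) (Z : Multiset (α × α)) :
    Prop where
  fst_le : Z.map Prod.fst ≤ A
  snd_le : Z.map Prod.snd ≤ B
  countP_eq_one : ∀ i, Z.countP (fun z => i ∈ t z.1 ∩ t z.2) = 1
  inter_nonempty : ∀ z ∈ Z, (t z.1 ∩ t z.2).Nonempty

theorem IsPairing.fst_mem {ι : Type*} {t : α → Set ι} {Z : Multiset (α × α)}
    (hZ : IsPairing t A B Z) {z : α × α} (hz : z ∈ Z) : z.1 ∈ A :=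
  Multiset.mem_of_le hZ.fst_le (Multiset.mem_map_of_mem _ hz)

theorem IsPairing.snd_mem {ι : Type*} {t : α → Set ι} {Z : Multiset (α × α)}
    (hZ : IsPairing t A B Z) {z : α × α} (hz : z ∈ Z) : z.2 ∈ B :=
  Multiset.mem_of_le hZ.snd_le (Multiset.mem_map_of_mem _ hz)

theorem IsPairing.swap {ι : Type*} {t : α → Set ι} {Z : Multiset (α × α)}
    (hZ : IsPairing t A B Z) : IsPairing t B A (Z.map Prod.swap) where
  fst_le := by simpa [Multiset.map_map, Function.comp_def] using hZ.snd_le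
  snd_le := by simpa [Multiset.map_map, Function.comp_def] using hZ.fst_le
  countP_eq_one i := by
    simpa only [countP_map_eq_countP_comp, Prod.fst_swap, Prod.snd_swap, Set.inter_comm]
      using hZ.countP_eq_one i
  inter_nonempty := by
    simp only [Multiset.mem_map]
    rintro _ ⟨z, hz, rfl⟩
    simpa only [Prod.fst_swap, Prod.snd_swap, Set.inter_comm] using hZ.inter_nonempty z hz

theorem exists_pair_le_of_countP_eq_two {p : α → Prop} {x : α} (hA : A.countP p = 2)
    (hx : x ∈ A) : ∃ z, p z ∧ {x, z} ≤ A := by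
  obtain ⟨A', rfl⟩ := Multiset.exists_cons_of_mem hx
  have hpos : 0 < A'.countP p := by
    rw [Multiset.countP_cons] at hA
    split_ifs at hA <;> omega
  obtain ⟨z, hz, hpz⟩ := Multiset.countP_pos.1 hpos
  exact ⟨z, hpz, Multiset.cons_le_cons x (Multiset.singleton_le.2 hz)⟩

theorem pair_le_of_ne {x y : α} (hx : x ∈ A) (hy : y ∈ A) (hxy : x ≠ y) : {x, y} ≤ A :=
  (Multiset.cons_le_of_notMem (by simpa using hxy)).2 ⟨hx, Multiset.singleton_le.2 hy⟩

theorem triple_le_of_ne {x y z : α} (hx : x ∈ A) (hyz : {y, z} ≤ A) (hxy : x ≠ y) (hxz : x ≠ z) :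
    {x, y, z} ≤ A :=
  (Multiset.cons_le_of_notMem (by simp [hxy, hxz])).2 ⟨hx, hyz⟩

variable {t : α → Set (Fin 3)} {i j k : Fin 3}

theorem isPairing_pair {x y x' y' : α} (hx : {x, x'} ≤ A) (hy : {y, y'} ≤ B)
    (h : t x ∩ t y = {i}) (h' : t x' ∩ t y' = {i}ᶜ) : IsPairing t A B {(x, y), (x', y')} where
  fst_le := by simpa using hx
  snd_le := by simpa using hy
  countP_eq_one j := by
    by_cases hj : j = i <;> simp [← Multiset.cons_zero, h, h', hj, -Set.mem_inter_iff]
  inter_nonempty := by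
    have : ({i}ᶜ : Set (Fin 3)).Nonempty := ⟨i + 1, by simp⟩
    simp [h, h', this]

theorem isPairing_triple (hij : i ≠ j) (hik : i ≠ k) (hjk : j ≠ k) {x₁ x₂ x₃ y₁ y₂ y₃ : α}
    (hx : {x₁, x₂, x₃} ≤ A) (hy : {y₁, y₂, y₃} ≤ B) (h₁ : t x₁ ∩ t y₁ = {i})
    (h₂ : t x₂ ∩ t y₂ = {j}) (h₃ : t x₃ ∩ t y₃ = {k}) :
    IsPairing t A B {(x₁, y₁), (x₂, y₂), (x₃, y₃)} where
  fst_le := by simpa using hx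
  snd_le := by simpa using hy
  countP_eq_one l := by
    have hl : l = i ∨ l = j ∨ l = k := by omega
    rcases hl with rfl | rfl | rfl <;>
      simp [← Multiset.cons_zero, -Set.mem_inter_iff, *, Ne.symm]
  inter_nonempty := by simp [h₁, h₂, h₃]

theorem compl_singleton_inter_compl_singleton (hij : i ≠ j) (hik : i ≠ k) (hjk : j ≠ k) :
    ({i}ᶜ ∩ {j}ᶜ : Set (Fin 3)) = {k} := by
  ext l
  simp only [Set.mem_inter_iff, Set.mem_compl_iff, Set.mem_singleton_iff]
  omega

theorem countP_mem_eq_add (hij : i ≠ j) (hik : i ≠ k) (hjk : j ≠ k) (A : Multiset α) :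
    A.countP (i ∈ t ·) = A.countP (t · = {i}) + A.countP (t · = {j}ᶜ) + A.countP (t · = {k}ᶜ) +
      A.countP (t · = Set.univ) := by
  have hforall {p : Fin 3 → Prop} : (∀ l, p l) ↔ p i ∧ p j ∧ p k := by
    refine ⟨fun h => ⟨h i, h j, h k⟩, fun ⟨hi, hj, hk⟩ l => ?_⟩
    obtain rfl | rfl | rfl : l = i ∨ l = j ∨ l = k := by omega
    all_goals assumption
  induction A using Multiset.induction with
  | empty => simp
  | cons x A ih =>
    simp only [Multiset.countP_cons, ih, Set.ext_iff, hforall, Set.mem_singleton_iff,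
      Set.mem_compl_iff, Set.mem_univ]
    by_cases hi : i ∈ t x <;> by_cases hj : j ∈ t x <;> by_cases hk : k ∈ t x <;>
      simp [hi, hj, hk, hij, hik, hjk, hij.symm, hik.symm, hjk.symm] <;> ring

theorem trace_trichotomy (hA : ∀ i, A.countP (i ∈ t ·) = 2)
    (hA' : A.countP (t · = Set.univ) < 2) :
    (∀ i, ∃ x ∈ A, t x = {i}) ∨ (∀ i, ∃ x ∈ A, t x = {i}ᶜ) ∨
      ∃ i, (∃ x ∈ A, t x = {i}) ∧ ∃ x ∈ A, t x = {i}ᶜ := by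
  have exists_iff (a : Set (Fin 3)) : (∃ x ∈ A, t x = a) ↔ 0 < A.countP (t · = a) :=
    Multiset.countP_pos.symm
  have h₀ := hA 0
  have h₁ := hA 1
  have h₂ := hA 2
  rw [countP_mem_eq_add (j := 1) (k := 2) (by decide) (by decide) (by decide)] at h₀
  rw [countP_mem_eq_add (j := 2) (k := 0) (by decide) (by decide) (by decide)] at h₁
  rw [countP_mem_eq_add (j := 0) (k := 1) (by decide) (by decide) (by decide)] at h₂
  simp only [exists_iff, Fin.forall_fin_succ, Fin.exists_fin_succ, Fin.succ_zero_eq_one,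
    Fin.succ_one_eq_two, IsEmpty.forall_iff, IsEmpty.exists_iff, and_true, or_false]
  omega

theorem exists_ne_and_ne (i j : Fin 3) : ∃ k, i ≠ k ∧ j ≠ k := by decide +revert

theorem singleton_ne_compl_singleton (i j : Fin 3) : ({i} : Set (Fin 3)) ≠ {j}ᶜ := by
  obtain ⟨k, hik, hjk⟩ := exists_ne_and_ne i j
  exact fun h => hik.symm (h.ge hjk.symm)

theorem exists_pair_le_of_trace_eq {a b : Set (Fin 3)} (hab : a ≠ b) (ha : ∃ x ∈ A, t x = a)
    (hb : ∃ x ∈ A, t x = b) : ∃ x y, {x, y} ≤ A ∧ t x = a ∧ t y = b := by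
  obtain ⟨x, hx, rfl⟩ := ha
  obtain ⟨y, hy, rfl⟩ := hb
  exact ⟨x, y, pair_le_of_ne hx hy (ne_of_apply_ne t hab), rfl, rfl⟩

theorem exists_triple_le_of_trace_eq {a b c : Set (Fin 3)} (hab : a ≠ b) (hac : a ≠ c)
    (hbc : b ≠ c) (ha : ∃ x ∈ A, t x = a) (hb : ∃ x ∈ A, t x = b) (hc : ∃ x ∈ A, t x = c) :
    ∃ x y z, {x, y, z} ≤ A ∧ t x = a ∧ t y = b ∧ t z = c := by
  obtain ⟨x, hx, rfl⟩ := ha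
  obtain ⟨y, hy, rfl⟩ := hb
  obtain ⟨z, hz, rfl⟩ := hc
  exact ⟨x, y, z, triple_le_of_ne hx (pair_le_of_ne hy hz (ne_of_apply_ne t hbc))
    (ne_of_apply_ne t hab) (ne_of_apply_ne t hac), rfl, rfl, rfl⟩

theorem exists_triple_le_of_singleton_of_compl (hA : A.countP (j ∈ t ·) = 2) (hij : i ≠ j)
    (h : ∃ x ∈ A, t x = {i}) (h' : ∃ x ∈ A, t x = {i}ᶜ) :
    ∃ x y z, {x, y, z} ≤ A ∧ t x = {i} ∧ t y = {i}ᶜ ∧ j ∈ t z := by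
  obtain ⟨x, hx, hxi⟩ := h
  obtain ⟨y, hy, hyi⟩ := h'
  have hjx : j ∉ t x := by simpa [hxi] using hij.symm
  obtain ⟨z, hjz, hyz⟩ := exists_pair_le_of_countP_eq_two hA hy
  refine ⟨x, y, z, triple_le_of_ne hx hyz ?_ ?_, hxi, hyi, hjz⟩
  · exact ne_of_apply_ne t (by simpa only [hxi, hyi] using singleton_ne_compl_singleton i i)
  · rintro rfl
    exact hjx hjz

theorem exists_distinct_representatives (hA : ∀ i, A.countP (i ∈ t ·) = 2)
    (hA' : A.countP (t · = Set.univ) < 2) :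
    ∃ i j k : Fin 3, i ≠ j ∧ i ≠ k ∧ j ≠ k ∧
      ∃ x y z, {x, y, z} ≤ A ∧ i ∈ t x ∧ j ∈ t y ∧ k ∈ t z := by
  rcases trace_trichotomy hA hA' with h | h | ⟨i, hi, hi'⟩
  · obtain ⟨x, y, z, hle, hx, hy, hz⟩ :=
      exists_triple_le_of_trace_eq (by simp) (by simp) (by simp) (h 0) (h 1) (h 2)
    exact ⟨0, 1, 2, by decide, by decide, by decide, x, y, z, hle, by simp [hx, hy, hz]⟩
  · obtain ⟨x, y, z, hle, hx, hy, hz⟩ :=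
      exists_triple_le_of_trace_eq (by simp) (by simp) (by simp) (h 1) (h 2) (h 0)
    exact ⟨0, 1, 2, by decide, by decide, by decide, x, y, z, hle, by simp [hx, hy, hz]⟩
  · obtain ⟨x, y, z, hle, hx, hy, hz⟩ :=
      exists_triple_le_of_singleton_of_compl (j := i + 1) (hA _) (by simp) hi hi'
    exact ⟨i, i + 2, i + 1, by simp, by simp, by simp, x, y, z, hle, by simp [hx, hy, hz]⟩

theorem exists_isPairing_of_singletons (hA : ∀ i, ∃ x ∈ A, t x = {i})
    (hB : ∀ i, B.countP (i ∈ t ·) = 2) (hB' : B.countP (t · = Set.univ) < 2) :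
    ∃ Z, IsPairing t A B Z := by
  obtain ⟨i, j, k, hij, hik, hjk, x', y', z', hleB, hx', hy', hz'⟩ :=
    exists_distinct_representatives hB hB'
  obtain ⟨x, y, z, hleA, hx, hy, hz⟩ :=
    exists_triple_le_of_trace_eq (by simpa) (by simpa) (by simpa) (hA i) (hA j) (hA k)
  exact ⟨_, isPairing_triple hij hik hjk hleA hleB (by simpa [hx]) (by simpa [hy]) (by simpa [hz])⟩

theorem exists_isPairing_of_compl_singletons (hA : ∀ i, ∃ x ∈ A, t x = {i}ᶜ)
    (hB : ∀ i, ∃ x ∈ B, t x = {i}ᶜ) : ∃ Z, IsPairing t A B Z := by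
  obtain ⟨x, y, z, hleA, hx, hy, hz⟩ :=
    exists_triple_le_of_trace_eq (by simp) (by simp) (by simp) (hA 0) (hA 1) (hA 2)
  obtain ⟨y', z', x', hleB, hy', hz', hx'⟩ :=
    exists_triple_le_of_trace_eq (by simp) (by simp) (by simp) (hB 1) (hB 2) (hB 0)
  refine ⟨_, isPairing_triple (i := 2) (j := 0) (k := 1) (by decide) (by decide) (by decide)
    hleA hleB ?_ ?_ ?_⟩
  · rw [hx, hy', compl_singleton_inter_compl_singleton] <;> decide
  · rw [hy, hz', compl_singleton_inter_compl_singleton] <;> decide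
  · rw [hz, hx', compl_singleton_inter_compl_singleton] <;> decide

theorem exists_isPairing_of_compl_eq {b : Set (Fin 3)} (hib : i ∈ b) (hAi : ∃ x ∈ A, t x = {i})
    (hAi' : ∃ x ∈ A, t x = {i}ᶜ) (hBb : ∃ x ∈ B, t x = b) (hBi' : ∃ x ∈ B, t x = {i}ᶜ) :
    ∃ Z, IsPairing t A B Z := by
  have hb : b ≠ {i}ᶜ := by
    rintro rfl
    exact hib rfl
  obtain ⟨x, x', hleA, hx, hx'⟩ :=
    exists_pair_le_of_trace_eq (singleton_ne_compl_singleton i i) hAi hAi'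
  obtain ⟨y, y', hleB, hy, hy'⟩ := exists_pair_le_of_trace_eq hb hBb hBi'
  exact ⟨_, isPairing_pair (i := i) hleA hleB (by simpa [hx, hy]) (by simp [hx', hy'])⟩

theorem exists_isPairing_of_compl_ne (hij : i ≠ j) (hA : A.countP (j ∈ t ·) = 2)
    (hB : B.countP (i ∈ t ·) = 2) (hAi : ∃ x ∈ A, t x = {i}) (hAi' : ∃ x ∈ A, t x = {i}ᶜ)
    (hBj : ∃ x ∈ B, t x = {j}) (hBj' : ∃ x ∈ B, t x = {j}ᶜ) : ∃ Z, IsPairing t A B Z := by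
  obtain ⟨k, hik, hjk⟩ := exists_ne_and_ne i j
  obtain ⟨x, y, z, hleA, hx, hy, hz⟩ :=
    exists_triple_le_of_singleton_of_compl hA hij hAi hAi'
  obtain ⟨x', y', z', hleB, hx', hy', hz'⟩ :=
    exists_triple_le_of_singleton_of_compl hB hij.symm hBj hBj'
  have hleB' : {z', y', x'} ≤ B := by
    have : ({z', y', x'} : Multiset α) = {x', y', z'} := by
      simp only [Multiset.insert_eq_cons, ← Multiset.singleton_add]
      abel
    rwa [this]
  refine ⟨_, isPairing_triple hik hij hjk.symm hleA hleB' (by simpa [hx]) ?_ (by simpa [hx'])⟩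
  rw [hy, hy', compl_singleton_inter_compl_singleton hij hik hjk]

theorem exists_isPairing (hA : ∀ i, A.countP (i ∈ t ·) = 2) (hA' : A.countP (t · = Set.univ) < 2)
    (hB : ∀ i, B.countP (i ∈ t ·) = 2) (hB' : B.countP (t · = Set.univ) < 2) :
    ∃ Z, IsPairing t A B Z := by
  rcases trace_trichotomy hA hA' with hAs | hAc | ⟨i, hAi, hAi'⟩
  · exact exists_isPairing_of_singletons hAs hB hB'
  · rcases trace_trichotomy hB hB' with hBs | hBc | ⟨j, hBj, hBj'⟩
    · obtain ⟨Z, hZ⟩ := exists_isPairing_of_singletons hBs hA hA'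
      exact ⟨_, hZ.swap⟩
    · exact exists_isPairing_of_compl_singletons hAc hBc
    · obtain ⟨Z, hZ⟩ :=
        exists_isPairing_of_compl_eq (by simp) hBj hBj' (hAc (j + 1)) (hAc j)
      exact ⟨_, hZ.swap⟩
  · rcases trace_trichotomy hB hB' with hBs | hBc | ⟨j, hBj, hBj'⟩
    · obtain ⟨Z, hZ⟩ := exists_isPairing_of_singletons hBs hA hA'
      exact ⟨_, hZ.swap⟩
    · exact exists_isPairing_of_compl_eq (by simp) hAi hAi' (hBc (i + 1)) (hBc i)
    · obtain rfl | hij := eq_or_ne i j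
      · exact exists_isPairing_of_compl_eq (Set.mem_singleton i) hAi hAi' hBj hBj'
      · exact exists_isPairing_of_compl_ne hij (hA j) (hB i) hAi hAi' hBj hBj'

end Pairing

section Cycles

variable {V W : Type*} {G H : SimpleGraph V}

/-- `E` is the edge set of a cycle of `G`. Cycles are handled through their edge sets because these,
unlike walks or subgraphs, can be compared directly across different graphs on `V`. -/
def IsCycleEdgeSet (G : SimpleGraph V) (E : Set (Sym2 V)) : Prop :=
  ∃ (u : V) (p : G.Walk u u), p.IsCycle ∧ p.edgeSet = E

namespace IsCycleEdgeSet

variable {E : Set (Sym2 V)} {x y z : V}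

theorem subset_edgeSet (hE : IsCycleEdgeSet G E) : E ⊆ G.edgeSet := by
  obtain ⟨u, p, -, rfl⟩ := hE
  exact p.edges_subset_edgeSet

theorem mono (h : G ≤ H) (hE : IsCycleEdgeSet G E) : IsCycleEdgeSet H E := by
  obtain ⟨u, p, hp, rfl⟩ := hE
  exact ⟨u, p.mapLe h, hp.mapLe h, Walk.edgeSet_mapLe_eq_edgeSet h p⟩

theorem map (f : V ↪ W) (hE : IsCycleEdgeSet G E) :
    IsCycleEdgeSet (G.map f) (Sym2.map f '' E) := by
  obtain ⟨u, p, hp, rfl⟩ := hE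
  exact ⟨f u, p.map (Embedding.map f G).toHom, hp.map f.injective, Walk.edgeSet_map ..⟩

theorem exists_isCycle_snd_eq (hE : IsCycleEdgeSet G E) (hxy : s(x, y) ∈ E) :
    ∃ p : G.Walk x x, p.IsCycle ∧ p.snd = y ∧ p.edgeSet = E := by
  obtain ⟨u, c, hc, rfl⟩ := hE
  have hx : x ∈ c.support := c.fst_mem_support_of_mem_edges hxy
  obtain ⟨p, hp, hpc⟩ : ∃ p : G.Walk x x, p.IsCycle ∧ p.edgeSet = c.edgeSet :=
    ⟨c.rotate x hx, hc.rotate hx, Set.ext fun _ => (c.rotate_edges x hx).mem_iff⟩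
  have hy : y ∈ p.toSubgraph.neighborSet x := by
    rwa [Subgraph.mem_neighborSet, Walk.adj_toSubgraph_iff_mem_edges, ← Walk.mem_edgeSet, hpc]
  rw [hp.neighborSet_toSubgraph_endpoint] at hy
  rcases hy with hy | hy
  · exact ⟨p, hp, hy.symm, hpc⟩
  · exact ⟨p.reverse, hp.reverse, by rw [Walk.snd_reverse, hy], by rw [Walk.edgeSet_reverse, hpc]⟩

theorem exists_isPath (hE : IsCycleEdgeSet G E) (hxy : s(x, y) ∈ E) :
    ∃ q : G.Walk y x, q.IsPath ∧ s(x, y) ∉ q.edgeSet ∧ E = insert s(x, y) q.edgeSet := by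
  obtain ⟨p, hp, rfl, rfl⟩ := hE.exists_isCycle_snd_eq hxy
  have hadj := p.adj_snd hp.not_nil
  have hcons : .cons hadj p.tail = p := p.cons_tail_eq hp.not_nil
  rw [← hcons, Walk.cons_isCycle_iff] at hp
  exact ⟨p.tail, hp.1, hp.2, by rw [← Walk.edgeSet_cons hadj, hcons]⟩

theorem eq_triangle (hE : IsCycleEdgeSet G E) (hxy : s(x, y) ∈ E) (hyz : s(y, z) ∈ E)
    (hzx : s(z, x) ∈ E) : E = {s(x, y), s(y, z), s(z, x)} := by
  have hx : x ≠ y := G.ne_of_adj (hE.subset_edgeSet hxy)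
  have hy : y ≠ z := G.ne_of_adj (hE.subset_edgeSet hyz)
  have hz : z ≠ x := G.ne_of_adj (hE.subset_edgeSet hzx)
  obtain ⟨q, hq, -, rfl⟩ := hE.exists_isPath hxy
  have hyzq : s(y, z) ∈ q.edges := hyz.resolve_left (by grind)
  have hzxq : s(z, x) ∈ q.edges := hzx.resolve_left (by grind)
  obtain rfl := hq.eq_snd_of_mem_edges hyzq
  cases q with
  | nil => exact absurd hyzq List.not_mem_nil
  | cons h q =>
    simp only [Walk.snd_cons] at *
    rw [Walk.edges_cons, List.mem_cons] at hzxq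
    rw [hq.of_cons.eq_adj_toWalk_of_mem_edges (hzxq.resolve_left (by grind))]
    simp

end IsCycleEdgeSet

/-- `S` is a multiset of edge sets of cycles of `G` in which each `e` lies in exactly `m e` members,
counted with multiplicity. The multiplicity `F.indicator 1` gives decompositions of `F` into cycles,
and `G.edgeSet.indicator 2` gives cycle double covers. -/
def IsCycleCover (G : SimpleGraph V) (m : Sym2 V → ℕ) (S : Multiset (Set (Sym2 V))) : Prop :=
  (∀ E ∈ S, IsCycleEdgeSet G E) ∧ ∀ e, S.countP (e ∈ ·) = m e

theorem IsCycleEdgeSet.isCycleCover {E : Set (Sym2 V)} (hE : IsCycleEdgeSet G E) :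
    IsCycleCover G (E.indicator 1) {E} := by
  refine ⟨by simpa, fun e => ?_⟩
  by_cases he : e ∈ E <;> simp [← Multiset.cons_zero, he]

namespace IsCycleCover

variable {m n : Sym2 V → ℕ} {S S' : Multiset (Set (Sym2 V))}

theorem zero : IsCycleCover G 0 0 := by simp [IsCycleCover]

theorem add (hS : IsCycleCover G m S) (hS' : IsCycleCover G n S') :
    IsCycleCover G (m + n) (S + S') := by
  refine ⟨fun E hE => (Multiset.mem_add.1 hE).elim (hS.1 E) (hS'.1 E), fun e => ?_⟩
  rw [Multiset.countP_add, hS.2, hS'.2, Pi.add_apply]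

theorem mono (h : G ≤ H) (hS : IsCycleCover G m S) : IsCycleCover H m S :=
  ⟨fun E hE => (hS.1 E hE).mono h, hS.2⟩

end IsCycleCover

/-- `S` is the multiset of edge sets of the members of a cycle double cover of `G`. -/
abbrev IsDoubleCover (G : SimpleGraph V) (S : Multiset (Set (Sym2 V))) : Prop :=
  IsCycleCover G (G.edgeSet.indicator 2) S

theorem IsDoubleCover.map (f : V ↪ W) {S : Multiset (Set (Sym2 V))} (hS : IsDoubleCover G S) :
    IsDoubleCover (G.map f) (S.map (Sym2.map f '' ·)) := by
  refine ⟨by simpa using fun E hE => (hS.1 E hE).map f, fun e => ?_⟩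
  rw [countP_map_eq_countP_comp, edgeSet_map]
  by_cases he : e ∈ Set.range (Sym2.map f)
  · obtain ⟨e, rfl⟩ := he
    have hf := Sym2.map.injective f.injective
    simpa [hf.mem_set_image, Set.indicator_apply] using hS.2 e
  · have hE (E : Set (Sym2 V)) : e ∉ Sym2.map f '' E := fun h => he (Set.image_subset_range _ _ h)
    rw [Set.indicator_of_notMem (by exact hE _)]
    exact Multiset.countP_eq_zero.2 fun E _ => hE E

variable {u v z : V} {p q : G.Walk u v}

theorem disjoint_edgeSet_of_support {u' v' : V} {q : G.Walk u' v'}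
    (h : ∀ w ∈ p.support, w ∈ q.support → w = z) : Disjoint p.edgeSet q.edgeSet := by
  refine Set.disjoint_left.2 fun e hp hq => ?_
  induction e with
  | _ x y =>
    have hx := h x (p.fst_mem_support_of_mem_edges hp) (q.fst_mem_support_of_mem_edges hq)
    have hy := h y (p.snd_mem_support_of_mem_edges hp) (q.snd_mem_support_of_mem_edges hq)
    exact G.ne_of_adj (p.adj_of_mem_edges hp) (hx.trans hy.symm)

theorem isCycle_append_reverse (hp : p.IsPath) (hq : q.IsPath) (hpq : p ≠ q)
    (h : ∀ w ∈ p.support, w ∈ q.support → w = u ∨ w = v) : (p.append q.reverse).IsCycle := by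
  refine hp.isCycle_append hq.reverse (fun w hwp hwq => ?_) ?_
  · grind [Walk.dropLast_support_concat, Walk.IsPath.support_nodup, Walk.support_reverse,
      Walk.cons_tail_support]
  · grind [Walk.length_reverse, Walk.eq_of_length_le_one]

theorem exists_isCycleCover_symmDiff_le_one (hp : p.IsPath) (hq : q.IsPath)
    (h : ∀ w ∈ p.support, w ∈ q.support → w = u ∨ w = v) :
    ∃ S, IsCycleCover G ((p.edgeSet ∆ q.edgeSet).indicator 1) S ∧ S.card ≤ 1 := by
  obtain rfl | hpq := eq_or_ne p q
  · exact ⟨0, by simpa using .zero, by simp⟩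
  have hc := isCycle_append_reverse hp hq hpq h
  have hdisj : Disjoint p.edgeSet q.edgeSet := by
    have hnodup := hc.edges_nodup
    rw [Walk.edges_append, Walk.edges_reverse] at hnodup
    exact Set.disjoint_left.2 fun e he he' => List.disjoint_of_nodup_append hnodup he (by simpa)
  have hE : IsCycleEdgeSet G (p.edgeSet ∪ q.edgeSet) :=
    ⟨u, _, hc, by rw [Walk.edgeSet_append, Walk.edgeSet_reverse]⟩
  exact ⟨_, by rw [hdisj.symmDiff_eq_sup]; exact hE.isCycleCover, by simp⟩

theorem symmDiff_union_union {α : Type*} {s s' t t' : Set α} (hs : Disjoint s s')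
    (ht : Disjoint t t') (hst : Disjoint s t') (hst' : Disjoint s' t) :
    (s ∪ s') ∆ (t ∪ t') = s ∆ t ∪ s' ∆ t' := by
  ext x
  simp only [Set.disjoint_left, Set.mem_union, Set.mem_symmDiff] at *
  grind

theorem disjoint_symmDiff_symmDiff {α : Type*} {s s' t t' : Set α} (hs : Disjoint s s')
    (ht : Disjoint t t') (hst : Disjoint s t') (hst' : Disjoint s' t) :
    Disjoint (s ∆ t) (s' ∆ t') := by
  simp only [Set.disjoint_left, Set.mem_symmDiff] at *
  grind

section Append

variable {p₁ q₁ : G.Walk u z} {p₂ q₂ : G.Walk z v} {w : V}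

theorem eq_of_mem_support_of_isPath_append (hp : (p₁.append p₂).IsPath) (hw : w ∈ p₁.support)
    (hw' : w ∈ p₂.support) : w = z := by
  by_contra hwz
  exact hp.ne_of_mem_support_of_append hwz hw hw' rfl

theorem disjoint_edgeSet_of_isPath_append (hp : (p₁.append p₂).IsPath) :
    Disjoint p₁.edgeSet p₂.edgeSet :=
  disjoint_edgeSet_of_support fun _ => eq_of_mem_support_of_isPath_append hp

theorem disjoint_edgeSet_of_isPath_append_of_isPath_append (hp : (p₁.append p₂).IsPath)
    (hq : (q₁.append q₂).IsPath)
    (h : ∀ w ∈ p₁.support, w ∈ q₂.support → w = u ∨ w = v ∨ w = z) :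
    Disjoint p₁.edgeSet q₂.edgeSet := by
  refine disjoint_edgeSet_of_support (z := z) fun w hwp hwq => ?_
  rcases h w hwp hwq with rfl | rfl | rfl
  · exact eq_of_mem_support_of_isPath_append hq q₁.start_mem_support hwq
  · exact eq_of_mem_support_of_isPath_append hp hwp p₂.end_mem_support
  · rfl

theorem exists_isCycleCover_symmDiff_append (hp : (p₁.append p₂).IsPath)
    (hq : (q₁.append q₂).IsPath)
    (h : ∀ w ∈ (p₁.append p₂).support, w ∈ (q₁.append q₂).support → w = u ∨ w = v ∨ w = z) :
    ∃ S, IsCycleCover G (((p₁.append p₂).edgeSet ∆ (q₁.append q₂).edgeSet).indicator 1) S ∧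
      S.card ≤ 2 := by
  simp only [Walk.mem_support_append_iff] at h
  obtain ⟨S₁, hS₁, hcard₁⟩ := exists_isCycleCover_symmDiff_le_one hp.of_append_left
    hq.of_append_left fun w hwp hwq => by
      rcases h w (.inl hwp) (.inl hwq) with rfl | rfl | rfl
      · exact .inl rfl
      · exact .inr (eq_of_mem_support_of_isPath_append hp hwp p₂.end_mem_support)
      · exact .inr rfl
  obtain ⟨S₂, hS₂, hcard₂⟩ := exists_isCycleCover_symmDiff_le_one hp.of_append_right
    hq.of_append_right fun w hwp hwq => by
      rcases h w (.inr hwp) (.inr hwq) with rfl | rfl | rfl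
      · exact .inl (eq_of_mem_support_of_isPath_append hp p₁.start_mem_support hwp)
      · exact .inr rfl
      · exact .inl rfl
  have hpp := disjoint_edgeSet_of_isPath_append hp
  have hqq := disjoint_edgeSet_of_isPath_append hq
  have hpq := disjoint_edgeSet_of_isPath_append_of_isPath_append hp hq fun w hwp hwq =>
    h w (.inl hwp) (.inr hwq)
  have hqp := disjoint_edgeSet_of_isPath_append_of_isPath_append hq hp fun w hwq hwp =>
    h w (.inr hwp) (.inl hwq)
  refine ⟨S₁ + S₂, ?_, by rw [Multiset.card_add]; omega⟩
  rw [Walk.edgeSet_append, Walk.edgeSet_append, symmDiff_union_union hpp hqq hpq hqp.symm,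
    Set.indicator_union_of_disjoint (disjoint_symmDiff_symmDiff hpp hqq hpq hqp.symm)]
  exact hS₁.add hS₂

end Append

theorem exists_isCycleCover_symmDiff_le_two (hp : p.IsPath) (hq : q.IsPath)
    (h : ∀ w ∈ p.support, w ∈ q.support → w = u ∨ w = v ∨ w = z) :
    ∃ S, IsCycleCover G ((p.edgeSet ∆ q.edgeSet).indicator 1) S ∧ S.card ≤ 2 := by
  by_cases hz : z ∈ p.support ∧ z ∈ q.support
  · obtain ⟨p₁, p₂, rfl⟩ := Walk.mem_support_iff_exists_append.1 hz.1
    obtain ⟨q₁, q₂, rfl⟩ := Walk.mem_support_iff_exists_append.1 hz.2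
    exact exists_isCycleCover_symmDiff_append hp hq h
  · obtain ⟨S, hS, hcard⟩ := exists_isCycleCover_symmDiff_le_one hp hq (by grind)
    exact ⟨S, hS, by omega⟩

theorem symmDiff_insert_insert {α : Type*} {s t : Set α} {a : α} (hs : a ∉ s) (ht : a ∉ t) :
    insert a s ∆ insert a t = s ∆ t := by
  ext x
  simp only [Set.mem_symmDiff, Set.mem_insert_iff]
  grind

theorem exists_isCycleCover_symmDiff {C D : Set (Sym2 V)} {x y z : V} (hC : IsCycleEdgeSet G C)
    (hD : IsCycleEdgeSet H D) (hCxy : s(x, y) ∈ C) (hDxy : s(x, y) ∈ D)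
    (hGH : G.support ∩ H.support ⊆ {x, y, z}) :
    ∃ S, IsCycleCover (G ⊔ H) ((C ∆ D).indicator 1) S ∧ S.card ≤ 2 := by
  have hxy : x ≠ y := G.ne_of_adj (hC.subset_edgeSet hCxy)
  obtain ⟨p, hp, hpxy, rfl⟩ := hC.exists_isPath hCxy
  obtain ⟨q, hq, hqxy, rfl⟩ := hD.exists_isPath hDxy
  rw [symmDiff_insert_insert hpxy hqxy]
  have h : ∀ w ∈ p.support, w ∈ q.support → w = y ∨ w = x ∨ w = z := by
    intro w hw hw'
    have := hGH ⟨mem_support_of_mem_walk_support p (Walk.not_nil_of_ne hxy.symm) hw,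
      mem_support_of_mem_walk_support q (Walk.not_nil_of_ne hxy.symm) hw'⟩
    grind
  rw [← Walk.edgeSet_mapLe_eq_edgeSet (le_sup_left : G ≤ G ⊔ H),
    ← Walk.edgeSet_mapLe_eq_edgeSet (le_sup_right : H ≤ G ⊔ H)]
  exact exists_isCycleCover_symmDiff_le_two (hp.mapLe _) (hq.mapLe _) (by simpa)

end Cycles

section Gluing

variable {V : Type*} {G H : SimpleGraph V} {A B : Multiset (Set (Sym2 V))}

theorem IsCycleCover.exists_sum {ι : Type*} {k : ℕ} {Z : Multiset ι} {F : ι → Set (Sym2 V)}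
    (hZ : ∀ z ∈ Z, ∃ S, IsCycleCover G ((F z).indicator 1) S ∧ S.card ≤ k) :
    ∃ S, IsCycleCover G (fun e => Z.countP (e ∈ F ·)) S ∧ S.card ≤ k * Z.card := by
  induction Z using Multiset.induction with
  | empty => exact ⟨0, by simpa using .zero, by simp⟩
  | cons z Z ih =>
    obtain ⟨S, hS, hcard⟩ := hZ z (Z.mem_cons_self z)
    obtain ⟨S', hS', hcard'⟩ := ih fun z' hz' => hZ z' (Multiset.mem_cons_of_mem hz')
    refine ⟨S' + S, ?_, by rw [Multiset.card_add, Multiset.card_cons]; linarith⟩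
    convert hS'.add hS using 2 with e
    simp [Multiset.countP_cons, Set.indicator_apply]

theorem IsCycleCover.sub {m : Sym2 V → ℕ} {S : Multiset (Set (Sym2 V))}
    (hA : IsCycleCover G m A) (hle : S ≤ A) :
    IsCycleCover G (fun e => m e - S.countP (e ∈ ·)) (A - S) := by
  refine ⟨fun E hE => hA.1 E (Multiset.mem_of_le (Multiset.sub_le_self A S) hE), fun e => ?_⟩
  rw [Multiset.countP_sub hle, hA.2]

theorem countP_symmDiff_add_two_mul_countP_inter {α : Type*} (Z : Multiset (Set α × Set α))
    (e : α) :
    Z.countP (fun z => e ∈ z.1 ∆ z.2) + 2 * Z.countP (fun z => e ∈ z.1 ∩ z.2) =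
      Z.countP (fun z => e ∈ z.1) + Z.countP (fun z => e ∈ z.2) := by
  induction Z using Multiset.induction with
  | empty => simp
  | cons z Z ih =>
    simp only [Multiset.countP_cons, Set.mem_symmDiff, Set.mem_inter_iff] at ih ⊢
    by_cases h₁ : e ∈ z.1 <;> by_cases h₂ : e ∈ z.2 <;> simp [h₁, h₂] <;> omega

theorem IsCycleCover.exists_symmDiff_exchange {m n : Sym2 V → ℕ}
    {Z : Multiset (Set (Sym2 V) × Set (Sym2 V))} (hA : IsCycleCover G m A)
    (hB : IsCycleCover G n B) (hZA : Z.map Prod.fst ≤ A) (hZB : Z.map Prod.snd ≤ B)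
    (hZ : ∀ z ∈ Z, ∃ S, IsCycleCover G ((z.1 ∆ z.2).indicator 1) S ∧ S.card ≤ 2) :
    ∃ S, IsCycleCover G (fun e => m e + n e - 2 * Z.countP (fun z => e ∈ z.1 ∩ z.2)) S ∧
      S.card ≤ A.card + B.card := by
  obtain ⟨S, hS, hcard⟩ := IsCycleCover.exists_sum hZ
  refine ⟨A - Z.map Prod.fst + (B - Z.map Prod.snd) + S, ?_, ?_⟩
  · convert ((hA.sub hZA).add (hB.sub hZB)).add hS using 2 with e
    have hZe := countP_symmDiff_add_two_mul_countP_inter Z e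
    have hAe := Multiset.countP_le_of_le (e ∈ ·) hZA
    have hBe := Multiset.countP_le_of_le (e ∈ ·) hZB
    simp only [hA.2, hB.2, countP_map_eq_countP_comp, Pi.add_apply] at hAe hBe ⊢
    omega
  · have hAcard := Multiset.card_le_card hZA
    have hBcard := Multiset.card_le_card hZB
    simp only [Multiset.card_add, Multiset.card_sub hZA, Multiset.card_sub hZB,
      Multiset.card_map] at *
    omega

/-- The edge opposite to the vertex `x i` of the triangle with vertices `x 0`, `x 1` and `x 2`. -/
def oppositeEdge (x : Fin 3 → V) (i : Fin 3) : Sym2 V := s(x (i + 1), x (i + 2))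

variable {x : Fin 3 → V}

theorem mk_mem_range_oppositeEdge {i j : Fin 3} (hij : i ≠ j) :
    s(x i, x j) ∈ Set.range (oppositeEdge x) := by
  obtain ⟨k, ⟨rfl, rfl⟩ | ⟨rfl, rfl⟩⟩ :
      ∃ k, (k + 1 = i ∧ k + 2 = j) ∨ (k + 1 = j ∧ k + 2 = i) := by decide +revert
  exacts [⟨k, rfl⟩, ⟨k, Sym2.eq_swap⟩]

theorem oppositeEdge_mem_edgeSet (hG : Pairwise fun i j => G.Adj (x i) (x j)) (i : Fin 3) :
    oppositeEdge x i ∈ G.edgeSet :=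
  hG (by simp)

theorem edgeSet_inter_edgeSet_eq_range_oppositeEdge (hG : Pairwise fun i j => G.Adj (x i) (x j))
    (hH : Pairwise fun i j => H.Adj (x i) (x j)) (hGH : G.support ∩ H.support ⊆ Set.range x) :
    G.edgeSet ∩ H.edgeSet = Set.range (oppositeEdge x) := by
  refine subset_antisymm ?_ (Set.range_subset_iff.2 fun i =>
    ⟨oppositeEdge_mem_edgeSet hG i, oppositeEdge_mem_edgeSet hH i⟩)
  rintro ⟨u, v⟩ ⟨hGuv : G.Adj u v, hHuv : H.Adj u v⟩
  obtain ⟨i, rfl⟩ := hGH ⟨⟨v, hGuv⟩, ⟨v, hHuv⟩⟩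
  obtain ⟨j, rfl⟩ := hGH ⟨⟨x i, hGuv.symm⟩, ⟨x i, hHuv.symm⟩⟩
  exact mk_mem_range_oppositeEdge (ne_of_apply_ne x hGuv.ne)

theorem IsCycleEdgeSet.eq_range_oppositeEdge {E : Set (Sym2 V)} (hE : IsCycleEdgeSet G E)
    (h : ∀ i, oppositeEdge x i ∈ E) : E = Set.range (oppositeEdge x) := by
  refine subset_antisymm ?_ (Set.range_subset_iff.2 h)
  rw [hE.eq_triangle (h 0) (h 1) (h 2)]
  rintro _ (rfl | rfl | rfl)
  exacts [⟨0, rfl⟩, ⟨1, rfl⟩, ⟨2, rfl⟩]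

theorem IsDoubleCover.countP_mem_preimage_oppositeEdge (hA : IsDoubleCover G A)
    (hG : Pairwise fun i j => G.Adj (x i) (x j)) (i : Fin 3) :
    A.countP (fun E => i ∈ oppositeEdge x ⁻¹' E) = 2 := by
  simpa [oppositeEdge_mem_edgeSet hG i] using hA.2 (oppositeEdge x i)

theorem IsDoubleCover.countP_preimage_oppositeEdge_eq_univ (hA : IsDoubleCover G A) :
    A.countP (fun E => oppositeEdge x ⁻¹' E = Set.univ) =
      A.count (Set.range (oppositeEdge x)) := by
  refine Multiset.countP_congr rfl fun E hE => propext ⟨fun h => ?_, ?_⟩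
  · exact ((hA.1 E hE).eq_range_oppositeEdge fun i => h.ge trivial).symm
  · rintro rfl
    exact Set.preimage_range _

theorem indicator_edgeSet_sup (e : Sym2 V) :
    (G ⊔ H).edgeSet.indicator (2 : Sym2 V → ℕ) e = G.edgeSet.indicator 2 e +
      H.edgeSet.indicator 2 e - 2 * (G.edgeSet ∩ H.edgeSet).indicator 1 e := by
  simp only [edgeSet_sup, Set.indicator_apply, Set.mem_union, Set.mem_inter_iff]
  by_cases hG : e ∈ G.edgeSet <;> by_cases hH : e ∈ H.edgeSet <;> simp [hG, hH]

theorem IsDoubleCover.sup_of_replicate_le (hA : IsDoubleCover G A) (hB : IsDoubleCover H B)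
    (hle : Multiset.replicate 2 (G.edgeSet ∩ H.edgeSet) ≤ A) :
    IsDoubleCover (G ⊔ H) (A - Multiset.replicate 2 (G.edgeSet ∩ H.edgeSet) + B) := by
  convert ((hA.sub hle).mono le_sup_left).add (hB.mono le_sup_right) using 1
  ext e
  have hcount : (Multiset.replicate 2 (G.edgeSet ∩ H.edgeSet)).countP (e ∈ ·) =
      2 * (G.edgeSet ∩ H.edgeSet).indicator 1 e := by
    by_cases he : e ∈ G.edgeSet ∩ H.edgeSet <;>
      simp [Multiset.replicate_succ, -Multiset.cons_zero, he, -Set.mem_inter_iff]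
  have hle' := Multiset.countP_le_of_le (e ∈ ·) hle
  rw [hA.2, hcount] at hle'
  rw [indicator_edgeSet_sup, Pi.add_apply, hcount]
  omega

theorem IsPairing.countP_mem_inter {Z : Multiset (Set (Sym2 V) × Set (Sym2 V))}
    (hZ : IsPairing (oppositeEdge x ⁻¹' ·) A B Z) (hA : IsDoubleCover G A)
    (hB : IsDoubleCover H B) (hx : G.edgeSet ∩ H.edgeSet = Set.range (oppositeEdge x))
    (e : Sym2 V) :
    Z.countP (fun z => e ∈ z.1 ∩ z.2) = (G.edgeSet ∩ H.edgeSet).indicator 1 e := by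
  by_cases he : e ∈ G.edgeSet ∩ H.edgeSet
  · rw [Set.indicator_of_mem he]
    obtain ⟨i, rfl⟩ := hx.le he
    exact hZ.countP_eq_one i
  · rw [Set.indicator_of_notMem he, Multiset.countP_eq_zero]
    exact fun z hz hez => he
      ⟨(hA.1 _ (hZ.fst_mem hz)).subset_edgeSet hez.1, (hB.1 _ (hZ.snd_mem hz)).subset_edgeSet hez.2⟩

theorem IsPairing.exists_isDoubleCover_sup {Z : Multiset (Set (Sym2 V) × Set (Sym2 V))}
    (hZ : IsPairing (oppositeEdge x ⁻¹' ·) A B Z) (hA : IsDoubleCover G A) (hB : IsDoubleCover H B)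
    (hG : Pairwise fun i j => G.Adj (x i) (x j)) (hH : Pairwise fun i j => H.Adj (x i) (x j))
    (hGH : G.support ∩ H.support ⊆ Set.range x) :
    ∃ S, IsDoubleCover (G ⊔ H) S ∧ S.card ≤ A.card + B.card := by
  obtain ⟨S, hS, hcard⟩ := (hA.mono le_sup_left).exists_symmDiff_exchange (hB.mono le_sup_right)
      hZ.fst_le hZ.snd_le fun z hz => by
    obtain ⟨i, hi₁, hi₂⟩ := hZ.inter_nonempty z hz
    refine exists_isCycleCover_symmDiff (z := x i) (hA.1 _ (hZ.fst_mem hz))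
      (hB.1 _ (hZ.snd_mem hz)) hi₁ hi₂ (hGH.trans ?_)
    rintro _ ⟨j, rfl⟩
    obtain rfl | rfl | rfl : j = i ∨ j = i + 1 ∨ j = i + 2 := by omega
    all_goals simp
  refine ⟨S, ?_, hcard⟩
  convert hS using 1
  ext e
  rw [indicator_edgeSet_sup, hZ.countP_mem_inter hA hB
    (edgeSet_inter_edgeSet_eq_range_oppositeEdge hG hH hGH)]

theorem IsDoubleCover.exists_isDoubleCover_sup (hA : IsDoubleCover G A) (hB : IsDoubleCover H B)
    (hG : Pairwise fun i j => G.Adj (x i) (x j)) (hH : Pairwise fun i j => H.Adj (x i) (x j))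
    (hGH : G.support ∩ H.support ⊆ Set.range x) :
    ∃ S, IsDoubleCover (G ⊔ H) S ∧ S.card ≤ A.card + B.card := by
  have hx := edgeSet_inter_edgeSet_eq_range_oppositeEdge hG hH hGH
  by_cases hA' : Multiset.replicate 2 (G.edgeSet ∩ H.edgeSet) ≤ A
  · exact ⟨_, hA.sup_of_replicate_le hB hA', by
      rw [Multiset.card_add]; gcongr; exact Multiset.sub_le_self _ _⟩
  by_cases hB' : Multiset.replicate 2 (H.edgeSet ∩ G.edgeSet) ≤ B
  · exact ⟨_, sup_comm G H ▸ hB.sup_of_replicate_le hA hB', by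
      rw [Multiset.card_add, add_comm]; gcongr; exact Multiset.sub_le_self _ _⟩
  rw [← Multiset.le_count_iff_replicate_le, not_le, hx,
    ← hA.countP_preimage_oppositeEdge_eq_univ] at hA'
  rw [← Multiset.le_count_iff_replicate_le, not_le, Set.inter_comm, hx,
    ← hB.countP_preimage_oppositeEdge_eq_univ] at hB'
  obtain ⟨Z, hZ⟩ := exists_isPairing (hA.countP_mem_preimage_oppositeEdge hG) hA'
    (hB.countP_mem_preimage_oppositeEdge hH) hB'
  exact hZ.exists_isDoubleCover_sup hA hB hG hH hGH

end Gluing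

section CdcMin

variable {V W : Type*} {G H : SimpleGraph V}

theorem IsCycleSubgraph.isCycleEdgeSet [Finite V] {C : G.Subgraph} (hC : IsCycleSubgraph C) :
    IsCycleEdgeSet G C.edgeSet := by
  obtain ⟨hconn, hdeg⟩ := hC
  have hcyc : C.spanningCoe.IsCycles := fun v ⟨_, hw⟩ => hdeg v (C.edge_vert hw)
  obtain ⟨v, hv⟩ := hconn.nonempty
  have hne : (C.spanningCoe.neighborSet v).Nonempty :=
    Set.nonempty_of_ncard_ne_zero ((hdeg v hv).trans_ne two_ne_zero)
  obtain ⟨p, hp, hpv⟩ := hcyc.exists_cycle_toSubgraph_verts_eq_connectedComponentSupp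
    (c := C.spanningCoe.connectedComponentMk v) rfl hne
  have hmem (w) (hw : w ∈ C.verts) : w ∈ p.toSubgraph.verts := by
    rw [hpv]
    exact ConnectedComponent.sound ((hconn.preconnected ⟨w, hw⟩ ⟨v, hv⟩).map
      ⟨Subtype.val, fun h => h⟩)
  refine ⟨v, p.mapLe C.spanningCoe_le, hp.mapLe _, ?_⟩
  rw [Walk.edgeSet_mapLe_eq_edgeSet]
  ext ⟨u, w⟩
  refine ⟨fun h => p.edges_subset_edgeSet h, fun h => ?_⟩
  have : C.spanningCoe.LocallyFinite := fun _ => Fintype.ofFinite _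
  exact Walk.adj_toSubgraph_iff_mem_edges.1
    ((hp.adj_toSubgraph_iff_of_isCycles hcyc (hmem u (C.edge_vert h)) w).2 h)

theorem IsCycleEdgeSet.exists_isCycleSubgraph {E : Set (Sym2 V)} (hE : IsCycleEdgeSet G E) :
    ∃ C : G.Subgraph, IsCycleSubgraph C ∧ C.edgeSet = E := by
  obtain ⟨u, p, hp, rfl⟩ := hE
  exact ⟨p.toSubgraph, ⟨p.toSubgraph_connected.coe, fun v hv =>
    hp.ncard_neighborSet_toSubgraph_eq_two (p.mem_verts_toSubgraph.1 hv)⟩, p.edgeSet_toSubgraph⟩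

theorem IsCDC.isDoubleCover [Finite V] {S : Multiset G.Subgraph} (hS : IsCDC G S) :
    IsDoubleCover G (S.map Subgraph.edgeSet) := by
  refine ⟨by simpa using fun C hC => (hS.1 C hC).isCycleEdgeSet, fun e => ?_⟩
  rw [countP_map_eq_countP_comp]
  by_cases he : e ∈ G.edgeSet
  · rw [hS.2 e he, Set.indicator_of_mem he, Pi.ofNat_apply]
  · rw [Set.indicator_of_notMem he]
    exact Multiset.countP_eq_zero.2 fun C _ hC => he (C.edgeSet_subset hC)

theorem IsDoubleCover.exists_isCDC {S : Multiset (Set (Sym2 V))} (hS : IsDoubleCover G S) :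
    ∃ S' : Multiset G.Subgraph, IsCDC G S' ∧ S'.map Subgraph.edgeSet = S := by
  choose! f hf hfE using fun E (hE : IsCycleEdgeSet G E) => hE.exists_isCycleSubgraph
  have hmap : (S.map f).map Subgraph.edgeSet = S := by
    rw [Multiset.map_map, Function.comp_def, Multiset.map_congr rfl fun E hE => hfE E (hS.1 E hE),
      Multiset.map_id']
  refine ⟨S.map f, ⟨Multiset.forall_mem_map_iff.2 fun E hE => hf E (hS.1 E hE), fun e he => ?_⟩,
    hmap⟩
  rw [← countP_map_eq_countP_comp Subgraph.edgeSet (e ∈ ·), hmap, hS.2, Set.indicator_of_mem he,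
    Pi.ofNat_apply]

theorem IsDoubleCover.cdcMin_le {S : Multiset (Set (Sym2 V))} (hS : IsDoubleCover G S) :
    cdcMin G ≤ S.card := by
  obtain ⟨S', hS', rfl⟩ := hS.exists_isCDC
  exact sInf_le ⟨S', hS', by rw [Multiset.card_map]⟩

theorem exists_isDoubleCover_card_eq_cdcMin [Finite V] (hG : cdcMin G ≠ ⊤) :
    ∃ S, IsDoubleCover G S ∧ (S.card : ℕ∞) = cdcMin G := by
  obtain ⟨S, hS, hcard⟩ :
      cdcMin G ∈ {n : ℕ∞ | ∃ S : Multiset G.Subgraph, IsCDC G S ∧ S.card = n} :=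
    csInf_mem (Set.nonempty_iff_ne_empty.2 fun h => hG (by rw [cdcMin, h, sInf_empty]))
  exact ⟨_, hS.isDoubleCover, by rw [Multiset.card_map, hcard]⟩

theorem cdcMin_map_le [Finite V] (f : V ↪ W) : cdcMin (G.map f) ≤ cdcMin G := by
  by_cases hG : cdcMin G = ⊤
  · exact le_top.trans_eq hG.symm
  obtain ⟨S, hS, hcard⟩ := exists_isDoubleCover_card_eq_cdcMin hG
  rw [← hcard, ← Multiset.card_map (Sym2.map f '' ·) S]
  exact (hS.map f).cdcMin_le

theorem cdcMin_sup_le [Finite V] {x : Fin 3 → V} (hG : Pairwise fun i j => G.Adj (x i) (x j))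
    (hH : Pairwise fun i j => H.Adj (x i) (x j)) (hGH : G.support ∩ H.support ⊆ Set.range x) :
    cdcMin (G ⊔ H) ≤ cdcMin G + cdcMin H := by
  by_cases hG' : cdcMin G = ⊤
  · simp [hG']
  by_cases hH' : cdcMin H = ⊤
  · simp [hH']
  obtain ⟨A, hA, hAcard⟩ := exists_isDoubleCover_card_eq_cdcMin hG'
  obtain ⟨B, hB, hBcard⟩ := exists_isDoubleCover_card_eq_cdcMin hH'
  obtain ⟨S, hS, hcard⟩ := hA.exists_isDoubleCover_sup hB hG hH hGH
  rw [← hAcard, ← hBcard]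
  exact hS.cdcMin_le.trans (mod_cast hcard)

theorem map_embeddingOfSubset_induce_adj {s t : Set V} (h : s ⊆ t) {x y : t} :
    ((G.induce s).map (Set.embeddingOfSubset s t h)).Adj x y ↔
      (x : V) ∈ s ∧ (y : V) ∈ s ∧ G.Adj x y := by
  rw [map_adj]
  constructor
  · rintro ⟨u, v, huv, rfl, rfl⟩
    exact ⟨u.2, v.2, huv⟩
  · rintro ⟨hx, hy, hxy⟩
    exact ⟨⟨x, hx⟩, ⟨y, hy⟩, hxy, rfl, rfl⟩

theorem induce_union_eq_sup {s t : Set V} (hsep : ∀ u ∈ s, ∀ v ∈ t, G.Adj u v → u ∈ t ∨ v ∈ s) :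
    G.induce (s ∪ t) =
      (G.induce s).map (Set.embeddingOfSubset s (s ∪ t) Set.subset_union_left) ⊔
        (G.induce t).map (Set.embeddingOfSubset t (s ∪ t) Set.subset_union_right) := by
  ext ⟨u, hu⟩ ⟨v, hv⟩
  simp only [sup_adj, map_embeddingOfSubset_induce_adj, comap_adj, Function.Embedding.subtype_apply]
  refine ⟨fun huv => ?_, fun h => h.elim (·.2.2) (·.2.2)⟩
  have := hsep u
  have := hsep v
  grind [G.adj_comm]

theorem cdcMin_induce_union_le {s t : Set V} [Finite s] [Finite t] (hcard : (s ∩ t).ncard = 3)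
    (hclique : G.IsClique (s ∩ t)) (hsep : ∀ u ∈ s, ∀ v ∈ t, G.Adj u v → u ∈ t ∨ v ∈ s) :
    cdcMin (G.induce (s ∪ t)) ≤ cdcMin (G.induce s) + cdcMin (G.induce t) := by
  have : Finite ↑(s ∩ t) := Finite.Set.finite_inter_of_left s t
  let x : Fin 3 ≃ ↑(s ∩ t) := (Finite.equivFinOfCardEq hcard).symm
  let y (i : Fin 3) : ↑(s ∪ t) := ⟨x i, .inl (x i).2.1⟩
  have hx : Pairwise fun i j => G.Adj (x i) (x j) := fun i j hij =>
    hclique (x i).2 (x j).2 (Subtype.coe_ne_coe.2 (x.injective.ne hij))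
  rw [induce_union_eq_sup hsep]
  refine (cdcMin_sup_le (x := y) (fun i j hij => ?_) (fun i j hij => ?_) ?_).trans
    (add_le_add (cdcMin_map_le _) (cdcMin_map_le _))
  · exact (map_embeddingOfSubset_induce_adj _).2 ⟨(x i).2.1, (x j).2.1, hx hij⟩
  · exact (map_embeddingOfSubset_induce_adj _).2 ⟨(x i).2.2, (x j).2.2, hx hij⟩
  · rintro v ⟨⟨w, hw⟩, ⟨w', hw'⟩⟩
    have hvs := ((map_embeddingOfSubset_induce_adj _).1 hw).1
    have hvt := ((map_embeddingOfSubset_induce_adj _).1 hw').1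
    exact ⟨x.symm ⟨v, hvs, hvt⟩, by simp [y]⟩

theorem cdcMin_le_cdcMin_induce_univ [Finite V] : cdcMin G ≤ cdcMin (G.induce Set.univ) := by
  have hG : (G.induce Set.univ).map (Function.Embedding.subtype (· ∈ Set.univ)) = G := by
    ext u v
    simp only [map_adj, comap_adj, Function.Embedding.subtype_apply]
    simp
  exact (congrArg cdcMin hG).ge.trans (cdcMin_map_le _)

end CdcMin

theorem statement_11_general {V : Type*} (T : SimpleGraph V) {s : Finset V}
    {P : Multiset (Finset V)} (hP : IsPieceDecomp T s P) :
    cdcMin (T.induce (s : Set V)) ≤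
      (P.map fun s : Finset V => cdcMin (T.induce (s : Set V))).sum := by
  induction hP with
  | base s _ => rw [Multiset.map_singleton, Multiset.sum_singleton]
  | split s a b P Q hs _ _ hcard hclique hsep _ _ ihP ihQ =>
    rw [Multiset.map_add, Multiset.sum_add, ← hs, Finset.coe_union]
    refine (cdcMin_induce_union_le ?_ ?_ hsep).trans (add_le_add ihP ihQ)
    · rw [← Finset.coe_inter, Set.ncard_coe_finset, hcard]
    · rw [← Finset.coe_inter]
      exact fun u hu v hv => hclique u hu v hv

/-- For a plane triangulation `T` with decomposition-tree pieces `𝒫(T)`,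
`c(T) ≤ Σ_{G ∈ 𝒫(T)} c(G)`. -/
theorem statement_11 {V : Type*} [Fintype V] (T : SimpleGraph V)
    (hT : IsTriangulation T)
    (P : Multiset (Finset V)) (hP : IsPieceDecomp T Finset.univ P) :
    cdcMin T ≤ (P.map fun s => cdcMin (T.induce (s : Set V))).sum := by
  -- In the statement `P` is coerced to a multiset of sets by means of the monad structure.
  simp only [Multiset.bind_def, Multiset.pure_def, Multiset.bind_singleton, Multiset.map_map,
    Function.comp_def]
  exact cdcMin_le_cdcMin_induce_univ.trans (Finset.coe_univ (α := V) ▸ statement_11_general T hP)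
end
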